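/- Let f be C²-smooth on an open neighbourhood of S^{n-1} and suppose its restriction to S^{n-1} is orthogonal to all affine functions. If ‖f''_S(θ)‖ ≤ 1 for every θ ∈ S^{n-1} and ∫ ‖f''_S‖²_HS dσ_{n-1} ≤ b² for some b ≥ 0, then ∫ exp{ ((n−1)/(2(1+b²))) · |f| } dσ_{n-1} ≤ 2. -/

import Mathlib

open MeasureTheory Metric Filter
open scoped RealInnerProductSpace ENNReal NNReal

noncomputable section

namespace SecondOrderConc

/-- Euclidean space ℝⁿ. -/
abbrev E (n : ℕ) : Type := EuclideanSpace ℝ (Fin n)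

/-- The uniform (normalized rotation-invariant) probability measure `σ_{n-1}`
on the unit sphere `S^{n-1}`, viewed as a measure on the ambient space ℝⁿ. -/
def sphMeasure (n : ℕ) : Measure (E n) :=
  ((((volume : Measure (E n)).toSphere).map Subtype.val) Set.univ)⁻¹ •
    (((volume : Measure (E n)).toSphere).map Subtype.val)

variable {n : ℕ}

/-- Euclidean Hessian of `f` at `x`, as a continuous linear operator on ℝⁿ. -/
def hess (f : E n → ℝ) (x : E n) : E n →L[ℝ] E n :=
  fderiv ℝ (gradient f) x

/-- Squared Hilbert–Schmidt norm of an operator on ℝⁿ. -/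
def hsNormSq (A : E n →L[ℝ] E n) : ℝ :=
  ∑ i : Fin n, ‖A (EuclideanSpace.single i 1)‖ ^ 2

/-- Orthogonal projection of ℝⁿ onto `θ^⊥` (for a unit vector `θ`). -/
def projPerp (θ : E n) : E n →L[ℝ] E n :=
  ContinuousLinearMap.id ℝ (E n) - (innerSL ℝ θ).smulRight θ

/-- Spherical gradient `∇_S f(θ) = ∇f(θ) − ⟨∇f(θ),θ⟩θ`. -/
def sgrad (f : E n → ℝ) (θ : E n) : E n :=
  gradient f θ - ⟪gradient f θ, θ⟫ • θ

/-- Spherical Hessian `f''_S(θ) = P_{θ^⊥} (f''(θ) − ⟨∇f(θ),θ⟩ I_n) P_{θ^⊥}`. -/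
def sHess (f : E n → ℝ) (θ : E n) : E n →L[ℝ] E n :=
  (projPerp θ).comp
    ((hess f θ - ⟪gradient f θ, θ⟫ • ContinuousLinearMap.id ℝ (E n)).comp (projPerp θ))

/-- Spherical Laplacian `Δ_S f(θ) = Tr f''_S(θ)`. -/
def sLap (f : E n → ℝ) (θ : E n) : ℝ :=
  LinearMap.trace ℝ (E n) (sHess f θ).toLinearMap

/-- Euclidean Laplacian `Δ f = Tr f''`. -/
def eLap (f : E n → ℝ) (x : E n) : ℝ :=
  LinearMap.trace ℝ (E n) (hess f x).toLinearMap

/-- 0-homogeneous extension to `ℝⁿ \ {0}` of (the restriction to the sphere of) `g`. -/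
def ext0 (g : E n → ℝ) : E n → ℝ := fun x => g (‖x‖⁻¹ • x)

section Frames

lemma isCompact_orthogonalGroup (n : ℕ) :
    IsCompact (Matrix.orthogonalGroup (Fin n) ℝ : Set (Matrix (Fin n) (Fin n) ℝ)) := by
  have hcl : IsClosed (Matrix.orthogonalGroup (Fin n) ℝ : Set (Matrix (Fin n) (Fin n) ℝ)) := by
    have : (Matrix.orthogonalGroup (Fin n) ℝ : Set (Matrix (Fin n) (Fin n) ℝ)) =
        {A | A * star A = 1} := by
      ext A; exact Matrix.mem_orthogonalGroup_iff (Fin n) ℝ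
    rw [this]
    exact isClosed_eq (by fun_prop) continuous_const
  have hcpt : IsCompact (Set.pi Set.univ fun _ : Fin n =>
      Set.pi Set.univ fun _ : Fin n => Metric.closedBall (0 : ℝ) 1) :=
    isCompact_univ_pi fun _ => isCompact_univ_pi fun _ => isCompact_closedBall _ _
  refine hcpt.of_isClosed_subset hcl fun A hA i _ j _ => ?_
  simpa using entry_norm_bound_of_unitary hA i j

/-- The rows of a matrix, as vectors of Euclidean space. -/
def rowVec (A : Matrix (Fin n) (Fin n) ℝ) (k : Fin n) : E n := WithLp.toLp 2 (A k)

lemma orthonormal_rowVec {A : Matrix (Fin n) (Fin n) ℝ}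
    (hA : A ∈ Matrix.orthogonalGroup (Fin n) ℝ) : Orthonormal ℝ (rowVec A) := by
  rw [orthonormal_iff_ite]
  intro i j
  have h := (Matrix.mem_orthogonalGroup_iff (Fin n) ℝ).1 hA
  have := congrFun (congrFun h j) i
  simp only [Matrix.mul_apply, Matrix.one_apply] at this
  simp only [rowVec, PiLp.inner_apply, RCLike.inner_apply, conj_trivial]
  exact this.trans (by simp [eq_comm])

/-- The action of a matrix on a family of vectors by linear combinations. -/
def mixFrame (W : Matrix (Fin n) (Fin n) ℝ) (v : Fin n → E n) : Fin n → E n :=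
  fun k => ∑ l, W k l • v l

@[fun_prop]
lemma continuous_mixFrame (W : Matrix (Fin n) (Fin n) ℝ) :
    Continuous (mixFrame W) := by unfold mixFrame; fun_prop

lemma rowVec_mul (W A : Matrix (Fin n) (Fin n) ℝ) :
    rowVec (W * A) = mixFrame W (rowVec A) := by
  funext k; ext j
  simp [rowVec, mixFrame, Matrix.mul_apply]

lemma exists_rowVec {v : Fin n → E n} (hv : Orthonormal ℝ v) :
    ∃ W ∈ Matrix.orthogonalGroup (Fin n) ℝ, rowVec W = v := by
  refine ⟨Matrix.of fun k l => v k l, ?_, by funext k; ext j; simp [rowVec]⟩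
  rw [Matrix.mem_orthogonalGroup_iff]
  ext i j
  have := (orthonormal_iff_ite.1 hv) j i
  simp only [PiLp.inner_apply, RCLike.inner_apply, conj_trivial] at this
  simp only [Matrix.mul_apply, Matrix.one_apply]
  exact this.trans (by simp [eq_comm])

/-- An orthonormal family of `n` vectors as a linear isometry of `ℝⁿ`. -/
def frameEquiv {v : Fin n → E n} (hv : Orthonormal ℝ v) : E n ≃ₗᵢ[ℝ] E n :=
  (OrthonormalBasis.mk hv (by
    have := hv.linearIndependent.span_eq_top_of_card_eq_finrank' (by simp)
    rw [this])).repr.symm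

lemma frameEquiv_apply {v : Fin n → E n} (hv : Orthonormal ℝ v) (y : E n) :
    frameEquiv hv y = ∑ l, y l • v l := by
  simp [frameEquiv, ← OrthonormalBasis.sum_repr_symm]

instance sphMeasure_isProbabilityMeasure [NeZero n] :
    IsProbabilityMeasure (sphMeasure n) := by
  constructor
  simp only [sphMeasure, Measure.smul_apply, smul_eq_mul]
  have : Nontrivial (E n) := by
    have : Nontrivial (Fin n → ℝ) := Function.nontrivial
    exact (WithLp.equiv 2 (Fin n → ℝ)).nontrivial
  rw [Measure.map_apply measurable_subtype_coe MeasurableSet.univ, Set.preimage_univ]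
  refine ENNReal.inv_mul_cancel ?_ (measure_ne_top _ _)
  rw [Measure.toSphere_apply_univ]
  simp [NeZero.ne n]
  exact (measure_ball_pos _ _ one_pos).ne'

lemma ae_sphMeasure_mem_sphere (n : ℕ) :
    ∀ᵐ x ∂sphMeasure n, x ∈ Metric.sphere (0 : E n) 1 := by
  unfold sphMeasure
  refine Measure.ae_smul_measure ?_ _
  refine (ae_map_iff measurable_subtype_coe.aemeasurable Metric.isClosed_sphere.measurableSet).2 ?_
  exact Filter.Eventually.of_forall fun x => x.2

lemma sphMeasure_map_isometry (T : E n ≃ₗᵢ[ℝ] E n) :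
    (sphMeasure n).map T = sphMeasure n := by
  unfold sphMeasure
  rw [Measure.map_smul]
  congr 1
  ext s hs
  have hT : Measurable T := T.continuous.measurable
  rw [Measure.map_apply hT hs, Measure.map_apply measurable_subtype_coe (hT hs),
    Measure.map_apply measurable_subtype_coe hs,
    Measure.toSphere_apply' _ (measurable_subtype_coe (hT hs)),
    Measure.toSphere_apply' _ (measurable_subtype_coe hs)]
  congr 1
  have hmp := T.measurePreserving
  refine Eq.trans ?_ (hmp.measure_preimage_emb T.toHomeomorph.measurableEmbedding _)
  congr 1
  ext x
  simp only [Set.mem_preimage, Set.mem_smul, Set.mem_image, Subtype.exists]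
  constructor
  · rintro ⟨r, hr, _, ⟨y, hy, hys, rfl⟩, rfl⟩
    exact ⟨r, hr, T y, ⟨T y, by simpa using hy, hys, rfl⟩, by simp⟩
  · rintro ⟨r, hr, _, ⟨y, hy, hys, rfl⟩, hx⟩
    exact ⟨r, hr, T.symm y, ⟨T.symm y, by simpa using hy, by simpa using hys, rfl⟩,
      by rw [← map_smul, hx]; simp⟩

lemma isClosed_setOf_orthonormal :
    IsClosed {v : Fin n → E n | Orthonormal ℝ v} := by
  simp_rw [orthonormal_iff_ite, Set.ofPred_forall]
  exact isClosed_iInter fun i => isClosed_iInter fun j =>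
    isClosed_eq (by fun_prop) continuous_const

lemma exists_orthonormal_extension {s : Set (Fin n)} {v : Fin n → E n}
    (hv : Orthonormal ℝ (s.domRestrict v)) :
    ∃ w : Fin n → E n, Orthonormal ℝ w ∧ ∀ i ∈ s, w i = v i := by
  obtain ⟨b, hb⟩ := hv.exists_orthonormalBasis_extension_of_card_eq (by simp)
  exact ⟨b, b.orthonormal, hb⟩

lemma exists_orthogonal_row_eq (i : Fin n) {x : E n} (hx : ‖x‖ = 1) :
    ∃ W ∈ Matrix.orthogonalGroup (Fin n) ℝ, rowVec W i = x := by
  obtain ⟨w, hw, hwx⟩ := exists_orthonormal_extension (s := {i}) (v := fun _ => x) (by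
    refine ⟨fun _ => hx, fun a b hab => (hab ?_).elim⟩
    exact Subsingleton.elim a b)
  obtain ⟨W, hW, rfl⟩ := exists_rowVec hw
  exact ⟨W, hW, hwx i rfl⟩

/-- There is a rotation invariant law on orthonormal frames; each vector of such a random frame is
uniformly distributed on the sphere. -/
lemma exists_frameMeasure (n : ℕ) [NeZero n] :
    ∃ ρ : Measure (Fin n → E n), IsProbabilityMeasure ρ ∧ (∀ᵐ v ∂ρ, Orthonormal ℝ v) ∧
      (∀ W ∈ Matrix.orthogonalGroup (Fin n) ℝ, ρ.map (mixFrame W) = ρ) ∧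
      ∀ i, ρ.map (fun v => v i) = sphMeasure n := by
  let G := Matrix.orthogonalGroup (Fin n) ℝ
  have : CompactSpace G := isCompact_iff_compactSpace.1 (isCompact_orthogonalGroup n)
  let _ : MeasurableSpace G := borel G
  have : BorelSpace G := ⟨rfl⟩
  let K : TopologicalSpace.PositiveCompacts G := ⊤
  let μ : Measure G := Measure.haarMeasure K
  have hμ : IsProbabilityMeasure μ := ⟨by
    simpa [K] using Measure.haarMeasure_self (K₀ := K)⟩
  have hc : Continuous fun U : G => rowVec U.1 := by
    refine continuous_pi fun k => ?_
    refine (PiLp.continuous_toLp 2 _).comp ?_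
    exact (continuous_apply k).comp continuous_subtype_val
  have hinv : ∀ W ∈ Matrix.orthogonalGroup (Fin n) ℝ,
      (μ.map fun U : G => rowVec U.1).map (mixFrame W) = μ.map fun U : G => rowVec U.1 := by
    intro W hW
    rw [Measure.map_map (continuous_mixFrame W).measurable hc.measurable]
    have : (mixFrame W ∘ fun U : G => rowVec U.1) =
        (fun U : G => rowVec U.1) ∘ fun U : G => (⟨W, hW⟩ : G) * U := by
      funext U
      exact (rowVec_mul W U.1).symm
    rw [this, ← Measure.map_map hc.measurable (by fun_prop)]
    rw [map_mul_left_eq_self]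
  have hon : ∀ᵐ v ∂(μ.map fun U : G => rowVec U.1), Orthonormal ℝ v := by
    refine (ae_map_iff hc.aemeasurable isClosed_setOf_orthonormal.measurableSet).2 ?_
    exact Filter.Eventually.of_forall fun U => orthonormal_rowVec U.2
  have hprob := Measure.isProbabilityMeasure_map (μ := μ) hc.aemeasurable
  refine ⟨μ.map fun U : G => rowVec U.1, hprob, hon,
    hinv, fun i => ?_⟩
  generalize (μ.map fun U : G => rowVec U.1) = ρ at *
  ext s hs
  rw [Measure.map_apply (measurable_pi_apply i) hs]
  have hjc : Continuous fun p : (Fin n → E n) × E n => ∑ l, p.2 l • p.1 l := by fun_prop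
  have hl : ∀ᵐ v ∂ρ, ∫⁻ x, s.indicator 1 (∑ l, x l • v l) ∂sphMeasure n = sphMeasure n s := by
    filter_upwards [hon] with v hv
    have h1 : ∀ x : E n, s.indicator (1 : E n → ℝ≥0∞) (∑ l, x l • v l) =
        (frameEquiv hv ⁻¹' s).indicator 1 x := fun x => by
      rw [← frameEquiv_apply hv]; rfl
    have hm : Measurable (frameEquiv hv) := (frameEquiv hv).continuous.measurable
    simp_rw [h1]
    rw [lintegral_indicator_one (hm hs), ← Measure.map_apply hm hs, sphMeasure_map_isometry]
  have hr : ∀ᵐ x ∂sphMeasure n, ∫⁻ v, s.indicator 1 (∑ l, x l • v l) ∂ρ =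
      ρ ((fun v => v i) ⁻¹' s) := by
    filter_upwards [ae_sphMeasure_mem_sphere n] with x hx
    obtain ⟨W, hW, hWx⟩ := exists_orthogonal_row_eq i (by simpa using hx)
    have h1 : ∀ v : Fin n → E n, s.indicator (1 : E n → ℝ≥0∞) (∑ l, x l • v l) =
        (mixFrame W ⁻¹' ((fun v => v i) ⁻¹' s)).indicator 1 v := fun v => by
      have : ∑ l, x l • v l = mixFrame W v i := by simp [mixFrame, ← hWx, rowVec]
      rw [this]; rfl
    have hm := (continuous_mixFrame W).measurable
    have hs' : MeasurableSet ((fun v : Fin n → E n => v i) ⁻¹' s) := measurable_pi_apply i hs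
    simp_rw [h1]
    rw [lintegral_indicator_one (hm hs'), ← Measure.map_apply hm hs', hinv W hW]
  have hswap := lintegral_lintegral_swap (μ := ρ) (ν := sphMeasure n)
    (f := fun v x => s.indicator (1 : E n → ℝ≥0∞) (∑ l, x l • v l))
    (((measurable_one.indicator hs).comp hjc.measurable).aemeasurable)
  rw [lintegral_congr_ae hl, lintegral_congr_ae hr] at hswap
  simpa using hswap.symm

end Frames

/-- A rotation invariant law on the orthonormal frames of `ℝⁿ`. -/
def frameMeasure (n : ℕ) [NeZero n] : Measure (Fin n → E n) := (exists_frameMeasure n).choose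

section FrameIntegrals

lemma isCompact_setOf_orthonormal : IsCompact {v : Fin n → E n | Orthonormal ℝ v} := by
  refine (isCompact_univ_pi fun _ : Fin n => isCompact_closedBall (0 : E n) 1).of_isClosed_subset
    isClosed_setOf_orthonormal fun v hv i _ => ?_
  simpa using (hv.1 i).le

/-- Rotation of the vectors `i` and `j` of a family by the angle `s`. -/
def rotFrame (i j : Fin n) (s : ℝ) (v : Fin n → E n) : Fin n → E n := fun k =>
  if k = i then Real.cos s • v i + Real.sin s • v j
  else if k = j then Real.cos s • v j - Real.sin s • v i else v k

lemma orthonormal_rotFrame {i j : Fin n} (hij : i ≠ j) (s : ℝ) {v : Fin n → E n}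
    (hv : Orthonormal ℝ v) : Orthonormal ℝ (rotFrame i j s v) := by
  have h := orthonormal_iff_ite.1 hv
  have hs := Real.sin_sq_add_cos_sq s
  rw [orthonormal_iff_ite]
  intro a b
  by_cases hai : a = i <;> by_cases haj : a = j <;> by_cases hbi : b = i <;>
    by_cases hbj : b = j <;>
    simp only [rotFrame, hai, haj, hbi, hbj, hij, hij.symm, if_true, if_false, inner_add_left,
      inner_add_right, inner_sub_left, inner_sub_right, real_inner_smul_left,
      real_inner_smul_right, h] <;>
    first | nlinarith | grind

variable [NeZero n]

instance : IsProbabilityMeasure (frameMeasure n) := (exists_frameMeasure n).choose_spec.1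

lemma ae_orthonormal : ∀ᵐ v ∂frameMeasure n, Orthonormal ℝ v :=
  (exists_frameMeasure n).choose_spec.2.1

lemma frameMeasure_map_apply (i : Fin n) :
    (frameMeasure n).map (fun v => v i) = sphMeasure n :=
  (exists_frameMeasure n).choose_spec.2.2.2 i

lemma integral_sphMeasure {φ : E n → ℝ} (hφ : Continuous φ) (i : Fin n) :
    ∫ x, φ x ∂sphMeasure n = ∫ v, φ (v i) ∂frameMeasure n := by
  rw [← frameMeasure_map_apply i,
    integral_map (measurable_pi_apply i).aemeasurable hφ.aestronglyMeasurable]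

lemma integral_mixFrame {Φ : (Fin n → E n) → ℝ} (hΦ : Continuous Φ) {u : Fin n → E n}
    (hu : Orthonormal ℝ u) :
    ∫ v, Φ (fun k => ∑ l, u k l • v l) ∂frameMeasure n = ∫ v, Φ v ∂frameMeasure n := by
  obtain ⟨W, hW, rfl⟩ := exists_rowVec hu
  have := (exists_frameMeasure n).choose_spec.2.2.1 W hW
  conv_rhs => rw [show frameMeasure n = (frameMeasure n).map (mixFrame W) from this.symm]
  rw [integral_map (continuous_mixFrame W).aemeasurable hΦ.aestronglyMeasurable]
  rfl

lemma integrable_frameMeasure {Φ : (Fin n → E n) → ℝ} (hΦ : Continuous Φ) :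
    Integrable Φ (frameMeasure n) := by
  obtain ⟨C, hC⟩ := isCompact_setOf_orthonormal.exists_bound_of_continuousOn hΦ.continuousOn
  refine Integrable.of_bound hΦ.aestronglyMeasurable C ?_
  filter_upwards [ae_orthonormal] with v hv using hC v hv

lemma integrable_sphMeasure {φ : E n → ℝ} (hφ : Continuous φ) :
    Integrable φ (sphMeasure n) := by
  obtain ⟨C, hC⟩ := (isCompact_sphere (0 : E n) 1).exists_bound_of_continuousOn hφ.continuousOn
  refine Integrable.of_bound hφ.aestronglyMeasurable C ?_
  filter_upwards [ae_sphMeasure_mem_sphere n] with v hv using hC v hv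

lemma integrable_sphMeasure_prod {H : E n × (Fin n → E n) → ℝ} (hH : Continuous H) :
    Integrable H ((sphMeasure n).prod (frameMeasure n)) := by
  obtain ⟨C, hC⟩ := ((isCompact_sphere (0 : E n) 1).prod
    (isCompact_setOf_orthonormal (n := n))).exists_bound_of_continuousOn hH.continuousOn
  refine Integrable.of_bound hH.aestronglyMeasurable C ?_
  filter_upwards [Measure.quasiMeasurePreserving_fst.ae (ae_sphMeasure_mem_sphere n),
    Measure.quasiMeasurePreserving_snd.ae ae_orthonormal] with p h1 h2 using hC p ⟨h1, h2⟩

lemma integral_frame_mono {Φ Ψ : (Fin n → E n) → ℝ} (hΦ : Continuous Φ) (hΨ : Continuous Ψ)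
    (h : ∀ v, Orthonormal ℝ v → Φ v ≤ Ψ v) :
    ∫ v, Φ v ∂frameMeasure n ≤ ∫ v, Ψ v ∂frameMeasure n := by
  refine integral_mono_ae (integrable_frameMeasure hΦ) (integrable_frameMeasure hΨ) ?_
  filter_upwards [ae_orthonormal] with v hv using h v hv

lemma hasDerivAt_integral_frame {F F' : ℝ → (Fin n → E n) → ℝ}
    (hF : ∀ s, Continuous (F s)) (hF' : Continuous fun p : ℝ × (Fin n → E n) => F' p.1 p.2)
    (h : ∀ s v, HasDerivAt (fun s => F s v) (F' s v) s) (s : ℝ) :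
    HasDerivAt (fun s => ∫ v, F s v ∂frameMeasure n) (∫ v, F' s v ∂frameMeasure n) s := by
  obtain ⟨C, hC⟩ := ((isCompact_closedBall s 1).prod
    (isCompact_setOf_orthonormal (n := n))).exists_bound_of_continuousOn hF'.continuousOn
  refine (hasDerivAt_integral_of_dominated_loc_of_deriv_le (bound := fun _ => C)
    (Metric.closedBall_mem_nhds s one_pos)
    (.of_forall fun s => (hF s).aestronglyMeasurable) (integrable_frameMeasure (hF s))
    (hF'.comp (Continuous.prodMk_right s)).aestronglyMeasurable ?_ (integrable_const _) ?_).2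
  · filter_upwards [ae_orthonormal] with v hv t ht using hC (t, v) ⟨ht, hv⟩
  · exact .of_forall fun v t _ => h t v

lemma integral_rotFrame {Φ : (Fin n → E n) → ℝ} (hΦ : Continuous Φ) {i j : Fin n} (hij : i ≠ j)
    (s : ℝ) : ∫ v, Φ (rotFrame i j s v) ∂frameMeasure n = ∫ v, Φ v ∂frameMeasure n := by
  rw [← integral_mixFrame hΦ (orthonormal_rotFrame hij s
    (EuclideanSpace.basisFun (Fin n) ℝ).orthonormal)]
  congr with v
  congr 1
  funext k
  by_cases hki : k = i <;> by_cases hkj : k = j <;>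
    simp [rotFrame, hki, hkj, hij.symm, add_smul, sub_smul, Finset.sum_add_distrib,
      Finset.sum_sub_distrib]

end FrameIntegrals

section Covariance

lemma exists_eq_cos_add_sin {i j : Fin n} (hij : i ≠ j) {y : E n} (hy : ‖y‖ = 1) :
    ∃ w : E n, ‖w‖ = 1 ∧ ⟪EuclideanSpace.single i (1 : ℝ), w⟫ = 0 ∧
      y = Real.cos (Real.arccos (y i)) • EuclideanSpace.single i (1 : ℝ) +
        Real.sin (Real.arccos (y i)) • w := by
  set e : E n := EuclideanSpace.single i 1
  have he : ‖e‖ = 1 := by simp [e]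
  have hey : ⟪e, y⟫ = y i := by simp [e, EuclideanSpace.inner_single_left]
  have hyi : |y i| ≤ 1 := by
    rw [← hey, ← hy, ← one_mul ‖y‖, ← he]; exact abs_real_inner_le_norm e y
  rw [Real.cos_arccos (neg_le_of_abs_le hyi) (le_of_abs_le hyi), Real.sin_arccos]
  have hn : ‖y - y i • e‖ ^ 2 = 1 - y i ^ 2 := by
    rw [norm_sub_sq_real, norm_smul, real_inner_smul_right, real_inner_comm, hey, he, hy]
    simp only [mul_one, Real.norm_eq_abs, sq_abs]; ring
  have hn' : √(1 - y i ^ 2) = ‖y - y i • e‖ := by rw [← hn, Real.sqrt_sq (norm_nonneg _)]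
  rw [hn']
  by_cases h0 : y - y i • e = 0
  · refine ⟨EuclideanSpace.single j 1, by simp, ?_, ?_⟩
    · simp [e, EuclideanSpace.inner_single_left, hij]
    · rw [h0, norm_zero, zero_smul, add_zero]; exact sub_eq_zero.1 h0
  · refine ⟨‖y - y i • e‖⁻¹ • (y - y i • e), norm_smul_inv_norm h0, ?_, ?_⟩
    · rw [real_inner_smul_right, inner_sub_right, real_inner_smul_right, hey,
        real_inner_self_eq_norm_sq, he]; simp
    · rw [smul_smul, mul_inv_cancel₀ (norm_ne_zero_iff.2 h0)]; simp

/-- The pairing of the derivatives of `f` and `g` along the third vector of a frame, at points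
making an angle `s`. -/
def derivPairing [NeZero n] (f g : E n → ℝ) (i j k : Fin n) (s : ℝ) : ℝ :=
  ∫ v, fderiv ℝ f (v i) (v k) * fderiv ℝ g (Real.cos s • v i + Real.sin s • v j) (v k)
    ∂frameMeasure n

variable [NeZero n] {f g : E n → ℝ} {i j k : Fin n}

lemma integral_rotated_mul_fderiv (hf : ContDiff ℝ 1 f) (hg : ContDiff ℝ 1 g)
    (hij : i ≠ j) (hik : i ≠ k) (hjk : j ≠ k) (s : ℝ) :
    ∫ v, f (Real.cos s • v i - Real.sin s • v j) * fderiv ℝ g (v i) (v j) ∂frameMeasure n =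
      -Real.sin s * ∫ v, fderiv ℝ f (Real.cos s • v i - Real.sin s • v j) (v k) *
        fderiv ℝ g (v i) (v k) ∂frameMeasure n := by
  have hfc := hf.continuous
  have hf' : Continuous (fderiv ℝ f) := hf.continuous_fderiv one_ne_zero
  have hg' : Continuous (fderiv ℝ g) := hg.continuous_fderiv one_ne_zero
  let F : ℝ → (Fin n → E n) → ℝ := fun α v =>
    f (Real.cos s • v i - Real.sin s • (Real.cos α • v j + Real.sin α • v k)) *
      fderiv ℝ g (v i) (Real.cos α • v k - Real.sin α • v j)
  let F' : ℝ → (Fin n → E n) → ℝ := fun α v =>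
    fderiv ℝ f (Real.cos s • v i - Real.sin s • (Real.cos α • v j + Real.sin α • v k))
        (-(Real.sin s • (-Real.sin α • v j + Real.cos α • v k))) *
      fderiv ℝ g (v i) (Real.cos α • v k - Real.sin α • v j) +
    f (Real.cos s • v i - Real.sin s • (Real.cos α • v j + Real.sin α • v k)) *
      fderiv ℝ g (v i) (-Real.sin α • v k - Real.cos α • v j)
  have hconst : ∀ α, ∫ v, F α v ∂frameMeasure n =
      ∫ v, f (Real.cos s • v i - Real.sin s • v j) * fderiv ℝ g (v i) (v k) ∂frameMeasure n := by
    intro α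
    rw [← integral_rotFrame (Φ := fun v => f (Real.cos s • v i - Real.sin s • v j) *
      fderiv ℝ g (v i) (v k)) (by fun_prop) hjk α]
    simp [rotFrame, F, hij, hik, hjk.symm]
  have hd : ∀ α v, HasDerivAt (fun α => F α v) (F' α v) α := by
    intro α v
    have h1 : HasDerivAt (fun α => Real.cos s • v i -
        Real.sin s • (Real.cos α • v j + Real.sin α • v k))
        (-(Real.sin s • (-Real.sin α • v j + Real.cos α • v k))) α := by
      have := (((Real.hasDerivAt_cos α).smul_const (v j)).add
        ((Real.hasDerivAt_sin α).smul_const (v k))).const_smul (Real.sin s)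
      exact this.const_sub (Real.cos s • v i)
    have h2 : HasDerivAt (fun α => fderiv ℝ g (v i) (Real.cos α • v k - Real.sin α • v j))
        (fderiv ℝ g (v i) (-Real.sin α • v k - Real.cos α • v j)) α :=
      (fderiv ℝ g (v i)).hasFDerivAt.comp_hasDerivAt α
        (((Real.hasDerivAt_cos α).smul_const (v k)).sub
          ((Real.hasDerivAt_sin α).smul_const (v j)))
    exact (((hf.differentiable one_ne_zero _).hasFDerivAt).comp_hasDerivAt α h1).mul h2
  have hD := hasDerivAt_integral_frame (F := F) (F' := F') (fun α => by fun_prop) (by fun_prop)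
    hd 0
  rw [funext hconst] at hD
  have h0 := hD.unique (hasDerivAt_const _ _)
  have hF0 : ∀ v, F' 0 v = -Real.sin s * (fderiv ℝ f (Real.cos s • v i - Real.sin s • v j) (v k) *
      fderiv ℝ g (v i) (v k)) -
      f (Real.cos s • v i - Real.sin s • v j) * fderiv ℝ g (v i) (v j) := by
    intro v
    simp [F']
    ring
  simp_rw [hF0] at h0
  rw [integral_sub (integrable_frameMeasure (by fun_prop)) (integrable_frameMeasure (by fun_prop)),
    integral_const_mul] at h0
  linarith

lemma hasDerivAt_integral_mul_rotated (hf : ContDiff ℝ 1 f) (hg : ContDiff ℝ 1 g)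
    (hij : i ≠ j) (hik : i ≠ k) (hjk : j ≠ k) (s : ℝ) :
    HasDerivAt (fun s => ∫ v, f (v i) * g (Real.cos s • v i + Real.sin s • v j) ∂frameMeasure n)
      (-Real.sin s * derivPairing f g i j k s) s := by
  have hfc := hf.continuous
  have hgc := hg.continuous
  have hf' : Continuous (fderiv ℝ f) := hf.continuous_fderiv one_ne_zero
  have hg' : Continuous (fderiv ℝ g) := hg.continuous_fderiv one_ne_zero
  have hD := hasDerivAt_integral_frame
    (F := fun s v => f (v i) * g (Real.cos s • v i + Real.sin s • v j))
    (F' := fun s v => f (v i) * fderiv ℝ g (Real.cos s • v i + Real.sin s • v j)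
      (-Real.sin s • v i + Real.cos s • v j)) (fun α => by fun_prop) (by fun_prop)
    (fun s v => (((hg.differentiable one_ne_zero _).hasFDerivAt).comp_hasDerivAt s
      (((Real.hasDerivAt_cos s).smul_const (v i)).add
        ((Real.hasDerivAt_sin s).smul_const (v j)))).const_mul _) s
  have hrot : ∀ v : Fin n → E n, Real.cos s • (Real.cos s • v i + Real.sin s • v j) -
      Real.sin s • (Real.cos s • v j - Real.sin s • v i) = v i := by
    intro v
    have hs := Real.sin_sq_add_cos_sq s
    have : Real.cos s • (Real.cos s • v i + Real.sin s • v j) -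
      Real.sin s • (Real.cos s • v j - Real.sin s • v i) =
        (Real.sin s ^ 2 + Real.cos s ^ 2) • v i := by module
    rw [this, hs, one_smul]
  have e1 := integral_rotFrame (Φ := fun v => f (Real.cos s • v i - Real.sin s • v j) *
    fderiv ℝ g (v i) (v j)) (by fun_prop) hij s
  have e2 := integral_rotFrame (Φ := fun v =>
    fderiv ℝ f (Real.cos s • v i - Real.sin s • v j) (v k) * fderiv ℝ g (v i) (v k))
    (by fun_prop) hij s
  simp only [rotFrame, if_true, hij.symm, hik.symm, hjk.symm, if_false, hrot] at e1 e2
  convert hD using 1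
  have e3 : ∀ v : Fin n → E n, -Real.sin s • v i + Real.cos s • v j =
    Real.cos s • v j - Real.sin s • v i := fun v => by module
  simp_rw [e3]
  rw [e1, integral_rotated_mul_fderiv hf hg hij hik hjk, ← e2, derivPairing]

lemma integral_mul_rotated_ge (hf : ContDiff ℝ 1 f) (hg : ContDiff ℝ 1 g)
    (hij : i ≠ j) (hik : i ≠ k) (hjk : j ≠ k) {K : ℝ} (hK : ∀ s, derivPairing f g i j k s ≤ K)
    {s : ℝ} (hs : s ∈ Set.Icc 0 Real.pi) :
    ∫ x, f x * g x ∂sphMeasure n - K * (1 - Real.cos s) ≤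
      ∫ v, f (v i) * g (Real.cos s • v i + Real.sin s • v j) ∂frameMeasure n := by
  have hD : ∀ t, HasDerivAt (fun t => (∫ v, f (v i) * g (Real.cos t • v i + Real.sin t • v j)
      ∂frameMeasure n) - K * Real.cos t)
      (-Real.sin t * derivPairing f g i j k t - K * -Real.sin t) t := fun t =>
    (hasDerivAt_integral_mul_rotated hf hg hij hik hjk t).sub
      ((Real.hasDerivAt_cos t).const_mul K)
  have hm := monotoneOn_of_deriv_nonneg (convex_Icc 0 Real.pi)
    (fun t _ => (hD t).continuousAt.continuousWithinAt)
    (fun t _ => (hD t).differentiableAt.differentiableWithinAt) (fun t ht => by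
      rw [interior_Icc] at ht
      rw [(hD t).deriv]
      have := Real.sin_pos_of_mem_Ioo ht
      nlinarith [hK t])
  have := hm (Set.left_mem_Icc.2 Real.pi_pos.le) hs hs.1
  simp only [Real.cos_zero, Real.sin_zero, one_smul, zero_smul, add_zero] at this
  rw [integral_sphMeasure (φ := fun x => f x * g x) (hf.continuous.mul hg.continuous) i]
  linarith

lemma integral_apply_sphMeasure (hij : i ≠ j) : ∫ y : E n, y i ∂sphMeasure n = 0 := by
  have h := integral_rotFrame (Φ := fun v : Fin n → E n => v i i) (by fun_prop) hij Real.pi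
  rw [integral_sphMeasure (φ := fun y : E n => y i) (by fun_prop) i]
  simp only [rotFrame, if_true, Real.cos_pi, Real.sin_pi, zero_smul, add_zero, neg_smul, one_smul,
    PiLp.neg_apply, integral_neg] at h
  linarith

/-- The correlation of `f` and `g` at points related by a random rotation. -/
lemma integral_mul_combination_ge (hf : ContDiff ℝ 1 f) (hg : ContDiff ℝ 1 g)
    (hij : i ≠ j) (hik : i ≠ k) (hjk : j ≠ k) {K : ℝ} (hK : ∀ s, derivPairing f g i j k s ≤ K)
    {y : E n} (hy : ‖y‖ = 1) :
    ∫ x, f x * g x ∂sphMeasure n - K * (1 - y i) ≤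
      ∫ v, f (v i) * g (∑ l, y l • v l) ∂frameMeasure n := by
  have hfc := hf.continuous
  have hgc := hg.continuous
  obtain ⟨w, hw, hiw, hyw⟩ := exists_eq_cos_add_sin hij hy
  obtain ⟨u, hu, huu⟩ := exists_orthonormal_extension (s := {i, j})
    (v := fun l => if l = i then EuclideanSpace.single i (1 : ℝ) else w) (by
      refine ⟨fun a => ?_, fun a b hab => ?_⟩
      · by_cases ha : (a : Fin n) = i <;> simp [Set.domRestrict, ha, hw]
      · have hwi : ⟪w, EuclideanSpace.single i (1 : ℝ)⟫ = 0 := by rw [real_inner_comm, hiw]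
        have ha := a.2
        have hb := b.2
        have hab' : (a : Fin n) ≠ b := fun h => hab (Subtype.ext h)
        simp only [Set.mem_insert_iff, Set.mem_singleton_iff] at ha hb
        simp only [Set.domRestrict]
        rcases ha with ha | ha <;> rcases hb with hb | hb <;> rw [ha, hb] at hab' ⊢
        · exact (hab' rfl).elim
        · rwa [if_pos rfl, if_neg hij.symm]
        · rwa [if_pos rfl, if_neg hij.symm]
        · exact (hab' rfl).elim)
  have hui : u i = EuclideanSpace.single i (1 : ℝ) := by simpa using huu i (by simp)
  have huj : u j = w := by simpa [hij.symm] using huu j (by simp)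
  have hyi : |y i| ≤ 1 := by
    rw [← hy]; exact PiLp.norm_apply_le y i
  have hge := integral_mul_rotated_ge hf hg hij hik hjk hK
    ⟨Real.arccos_nonneg (y i), Real.arccos_le_pi (y i)⟩
  rw [← integral_mixFrame (Φ := fun v => f (v i) * g (Real.cos (Real.arccos (y i)) • v i +
    Real.sin (Real.arccos (y i)) • v j)) (by fun_prop) hu] at hge
  rw [Real.cos_arccos (neg_le_of_abs_le hyi) (le_of_abs_le hyi)] at hge
  refine hge.trans_eq (integral_congr_ae (.of_forall fun v => ?_))
  have h1 : ∑ l, u i l • v l = v i := by simp [hui]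
  have h2 : ∑ l, y l • v l = y i • v i + Real.sin (Real.arccos (y i)) • ∑ l, u j l • v l := by
    rw [Real.cos_arccos (neg_le_of_abs_le hyi) (le_of_abs_le hyi)] at hyw
    conv_lhs => rw [hyw]
    simp [add_smul, Finset.sum_add_distrib, Finset.smul_sum, mul_smul, huj]
  simp only [h1, h2]

/-- Covariance bound through the pairings of derivatives. -/
theorem covariance_le (hf : ContDiff ℝ 1 f) (hg : ContDiff ℝ 1 g)
    (hij : i ≠ j) (hik : i ≠ k) (hjk : j ≠ k) {K : ℝ} (hK : ∀ s, derivPairing f g i j k s ≤ K) :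
    ∫ x, f x * g x ∂sphMeasure n ≤
      (∫ x, f x ∂sphMeasure n) * (∫ x, g x ∂sphMeasure n) + K := by
  have hfc := hf.continuous
  have hgc := hg.continuous
  set c := ∫ x, f x * g x ∂sphMeasure n
  have hint : Integrable (fun p : E n × (Fin n → E n) => f (p.2 i) * g (∑ l, p.1 l • p.2 l))
      ((sphMeasure n).prod (frameMeasure n)) := integrable_sphMeasure_prod (by fun_prop)
  have hswap : ∫ y, ∫ v, f (v i) * g (∑ l, y l • v l) ∂frameMeasure n ∂sphMeasure n =
      (∫ x, f x ∂sphMeasure n) * (∫ x, g x ∂sphMeasure n) := by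
    rw [integral_integral_swap (by exact hint), integral_sphMeasure hfc i, ← integral_mul_const]
    refine integral_congr_ae ?_
    filter_upwards [ae_orthonormal] with v hv
    rw [integral_const_mul]
    congr 1
    conv_rhs => rw [← sphMeasure_map_isometry (frameEquiv hv)]
    rw [integral_map (frameEquiv hv).continuous.aemeasurable hgc.aestronglyMeasurable]
    simp_rw [frameEquiv_apply hv]
  rw [← hswap]
  have h1 : ∫ y, (c - K * (1 - y i)) ∂sphMeasure n = c - K := by
    rw [integral_sub (integrable_const _) (integrable_sphMeasure (by fun_prop)),
      integral_const_mul, integral_sub (integrable_const _) (integrable_sphMeasure (by fun_prop)),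
      integral_apply_sphMeasure hij]
    simp
  have h2 : ∫ y, (c - K * (1 - y i)) ∂sphMeasure n ≤
      ∫ y, ∫ v, f (v i) * g (∑ l, y l • v l) ∂frameMeasure n ∂sphMeasure n := by
    refine integral_mono_ae ?_ ?_ ?_
    · exact integrable_sphMeasure (by fun_prop)
    · exact hint.integral_prod_left
    · filter_upwards [ae_sphMeasure_mem_sphere n] with y hy
      exact integral_mul_combination_ge hf hg hij hik hjk hK (by simpa using hy)
  linarith

end Covariance

section Consequences

lemma inner_gradient_eq (f : E n → ℝ) (x y : E n) : ⟪gradient f x, y⟫ = fderiv ℝ f x y := by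
  simp [gradient]

lemma continuous_gradient {f : E n → ℝ} (hf : ContDiff ℝ 1 f) : Continuous (gradient f) := by
  have := hf.continuous_fderiv one_ne_zero
  unfold gradient
  fun_prop

lemma continuous_sgrad {f : E n → ℝ} (hf : ContDiff ℝ 1 f) : Continuous (sgrad f) := by
  have := continuous_gradient hf
  unfold sgrad
  fun_prop

lemma inner_sgrad (f : E n → ℝ) {x y : E n} (h : ⟪x, y⟫ = 0) :
    ⟪sgrad f x, y⟫ = fderiv ℝ f x y := by
  simp [sgrad, inner_sub_left, real_inner_smul_left, h]

lemma inner_sgrad_self (f : E n → ℝ) {x : E n} (h : ‖x‖ = 1) : ⟪sgrad f x, x⟫ = 0 := by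
  simp [sgrad, inner_sub_left, real_inner_smul_left, h]

lemma sum_inner_sq_of_orthonormal {v : Fin n → E n} (hv : Orthonormal ℝ v) (x : E n) :
    ∑ k, ⟪x, v k⟫ ^ 2 = ‖x‖ ^ 2 := by
  have := (OrthonormalBasis.mk hv (by
    rw [hv.linearIndependent.span_eq_top_of_card_eq_finrank' (by simp)])).sum_sq_norm_inner_left x
  simpa using this

lemma sum_fderiv_sq {v : Fin n → E n} (hv : Orthonormal ℝ v) (f : E n → ℝ) (i : Fin n) :
    ∑ k ∈ Finset.univ.erase i, fderiv ℝ f (v i) (v k) ^ 2 = ‖sgrad f (v i)‖ ^ 2 := by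
  rw [← sum_inner_sq_of_orthonormal hv, ← Finset.add_sum_erase _ _ (Finset.mem_univ i),
    inner_sgrad_self f (hv.1 i)]
  simp only [ne_eq, OfNat.ofNat_ne_zero, not_false_eq_true, zero_pow, zero_add]
  refine Finset.sum_congr rfl fun k hk => ?_
  rw [inner_sgrad f (hv.2 (Finset.ne_of_mem_erase hk).symm)]

variable [NeZero n] {f g u : E n → ℝ} {i j k : Fin n}

lemma integral_fderiv_sq_mul_eq (hf : ContDiff ℝ 1 f) (hu : Continuous u) {l : Fin n}
    (hik : i ≠ k) (hjk : j ≠ k) (hil : i ≠ l) (hjl : j ≠ l) (s : ℝ) :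
    ∫ v, fderiv ℝ f (v i) (v l) ^ 2 * u (Real.cos s • v i + Real.sin s • v j) ∂frameMeasure n =
    ∫ v, fderiv ℝ f (v i) (v k) ^ 2 * u (Real.cos s • v i + Real.sin s • v j) ∂frameMeasure n := by
  have hf' : Continuous (fderiv ℝ f) := hf.continuous_fderiv one_ne_zero
  rcases eq_or_ne k l with rfl | hkl
  · rfl
  · rw [← integral_rotFrame (Φ := fun v => fderiv ℝ f (v i) (v k) ^ 2 *
      u (Real.cos s • v i + Real.sin s • v j)) (by fun_prop) hkl (Real.pi / 2)]
    simp [rotFrame, hik, hjk, hil, hjl]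

lemma integral_fderiv_sq_mul_rotated_le (hf : ContDiff ℝ 1 f) (hu : Continuous u)
    (hu0 : ∀ x, 0 ≤ u x) (hij : i ≠ j) (hik : i ≠ k) (hjk : j ≠ k) (s : ℝ) :
    ((n : ℝ) - 2) * ∫ v, fderiv ℝ f (v i) (v k) ^ 2 * u (Real.cos s • v i + Real.sin s • v j)
        ∂frameMeasure n ≤
      ∫ v, ‖sgrad f (v i)‖ ^ 2 * u (Real.cos s • v i + Real.sin s • v j) ∂frameMeasure n := by
  have hf' : Continuous (fderiv ℝ f) := hf.continuous_fderiv one_ne_zero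
  have hsg := continuous_sgrad hf
  have h1 : ∫ v, ∑ l ∈ (Finset.univ.erase i).erase j, fderiv ℝ f (v i) (v l) ^ 2 *
      u (Real.cos s • v i + Real.sin s • v j) ∂frameMeasure n ≤
      ∫ v, ‖sgrad f (v i)‖ ^ 2 * u (Real.cos s • v i + Real.sin s • v j) ∂frameMeasure n := by
    refine integral_frame_mono (by fun_prop) (by fun_prop) fun v hv => ?_
    rw [← sum_fderiv_sq hv, Finset.sum_mul]
    exact Finset.sum_le_sum_of_subset_of_nonneg (Finset.erase_subset _ _)
      fun l _ _ => mul_nonneg (sq_nonneg _) (hu0 _)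
  rw [integral_finsetSum _ fun l _ => integrable_frameMeasure (by fun_prop),
    Finset.sum_congr rfl fun l hl => integral_fderiv_sq_mul_eq hf hu hik hjk
      (by simp at hl; tauto) (by simp at hl; tauto) s, Finset.sum_const,
    Finset.card_erase_of_mem (by simp [hij.symm]), Finset.card_erase_of_mem (by simp)] at h1
  have hn : 2 ≤ n := by
    by_contra! h
    have := i.2; have := j.2; exact hij (Fin.ext (by omega))
  have h2 : ((n - 1 - 1 : ℕ) : ℝ) = n - 2 := by
    rw [Nat.sub_sub, Nat.cast_sub hn]; norm_num
  simpa [h2] using h1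

lemma integral_fderiv_sq_mul (hf : ContDiff ℝ 1 f) (hu : Continuous u) (hik : i ≠ k) :
    ((n : ℝ) - 1) * ∫ v, fderiv ℝ f (v i) (v k) ^ 2 * u (v i) ∂frameMeasure n =
      ∫ x, ‖sgrad f x‖ ^ 2 * u x ∂sphMeasure n := by
  have hf' : Continuous (fderiv ℝ f) := hf.continuous_fderiv one_ne_zero
  have hsg := continuous_sgrad hf
  have h1 : ∫ v, ∑ l ∈ Finset.univ.erase i, fderiv ℝ f (v i) (v l) ^ 2 * u (v i)
      ∂frameMeasure n = ∫ v, ‖sgrad f (v i)‖ ^ 2 * u (v i) ∂frameMeasure n := by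
    refine integral_congr_ae ?_
    filter_upwards [ae_orthonormal] with v hv
    rw [← sum_fderiv_sq hv, Finset.sum_mul]
  have h3 : ∀ l, i ≠ l → ∫ v, fderiv ℝ f (v i) (v l) ^ 2 * u (v i) ∂frameMeasure n =
      ∫ v, fderiv ℝ f (v i) (v k) ^ 2 * u (v i) ∂frameMeasure n := fun l hl => by
    simpa using integral_fderiv_sq_mul_eq (j := i) hf hu hik hik hl hl 0
  rw [integral_finsetSum _ fun l _ => integrable_frameMeasure (by fun_prop),
    Finset.sum_congr rfl fun l hl => h3 l (Finset.ne_of_mem_erase hl).symm, Finset.sum_const,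
    Finset.card_erase_of_mem (by simp)] at h1
  have h2 : ((n - 1 : ℕ) : ℝ) = n - 1 := by
    rw [Nat.cast_sub (NeZero.one_le)]; norm_num
  rw [integral_sphMeasure (φ := fun x => ‖sgrad f x‖ ^ 2 * u x) (by fun_prop) i]
  simpa [h2] using h1

lemma integral_fderiv_sq_mul_rotated (hf : ContDiff ℝ 1 f) (hu : Continuous u)
    (hij : i ≠ j) (hik : i ≠ k) (hjk : j ≠ k) (s : ℝ) :
    ∫ v, fderiv ℝ f (Real.cos s • v i + Real.sin s • v j) (v k) ^ 2 *
        u (Real.cos s • v i + Real.sin s • v j) ∂frameMeasure n =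
      ∫ v, fderiv ℝ f (v i) (v k) ^ 2 * u (v i) ∂frameMeasure n := by
  have hf' : Continuous (fderiv ℝ f) := hf.continuous_fderiv one_ne_zero
  rw [← integral_rotFrame (Φ := fun v => fderiv ℝ f (v i) (v k) ^ 2 * u (v i)) (by fun_prop) hij s]
  simp [rotFrame, hik.symm, hjk.symm]

/-- Poincaré inequality on the sphere. -/
theorem poincare_sphere (hf : ContDiff ℝ 1 f) (hij : i ≠ j) (hik : i ≠ k) (hjk : j ≠ k) :
    ((n : ℝ) - 1) * ∫ x, f x ^ 2 ∂sphMeasure n ≤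
      (n - 1) * (∫ x, f x ∂sphMeasure n) ^ 2 + ∫ x, ‖sgrad f x‖ ^ 2 ∂sphMeasure n := by
  have hf' : Continuous (fderiv ℝ f) := hf.continuous_fderiv one_ne_zero
  have h2 := integral_fderiv_sq_mul (u := fun _ => 1) hf continuous_const hik
  simp only [mul_one] at h2
  have hK : ∀ s, derivPairing f f i j k s ≤ ∫ v, fderiv ℝ f (v i) (v k) ^ 2 ∂frameMeasure n := by
    intro s
    have h1 := integral_fderiv_sq_mul_rotated (u := fun _ => 1) hf continuous_const hij hik hjk s
    simp only [mul_one] at h1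
    have h3 : derivPairing f f i j k s ≤ ∫ v, (1 / 2 * fderiv ℝ f (v i) (v k) ^ 2 +
        1 / 2 * fderiv ℝ f (Real.cos s • v i + Real.sin s • v j) (v k) ^ 2) ∂frameMeasure n :=
      integral_frame_mono (by fun_prop) (by fun_prop) fun v _ => by
        nlinarith [sq_nonneg (fderiv ℝ f (v i) (v k) -
          fderiv ℝ f (Real.cos s • v i + Real.sin s • v j) (v k))]
    rw [integral_add (integrable_frameMeasure (by fun_prop))
      (integrable_frameMeasure (by fun_prop)), integral_const_mul, integral_const_mul, h1] at h3
    linarith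
  have h4 := covariance_le hf hf hij hik hjk hK
  have hn : (1 : ℝ) ≤ n := by exact_mod_cast (NeZero.one_le : 1 ≤ n)
  have h5 := mul_le_mul_of_nonneg_left h4 (sub_nonneg.2 hn)
  simp only [← pow_two] at h5
  rw [mul_add, h2] at h5
  exact h5

lemma derivPairing_le (hn : 6 ≤ n) (hf : ContDiff ℝ 1 f) (hu : Continuous u) (hu0 : ∀ x, 0 ≤ u x)
    (hgu : ∀ x, fderiv ℝ g x = u x • fderiv ℝ f x)
    (hij : i ≠ j) (hik : i ≠ k) (hjk : j ≠ k) (s : ℝ) :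
    derivPairing f g i j k s ≤ 9 / (8 * ((n : ℝ) - 1)) / 2 *
      ((∫ v, ‖sgrad f (v i)‖ ^ 2 * u (Real.cos s • v i + Real.sin s • v j) ∂frameMeasure n) +
        ∫ x, ‖sgrad f x‖ ^ 2 * u x ∂sphMeasure n) := by
  have hf' : Continuous (fderiv ℝ f) := hf.continuous_fderiv one_ne_zero
  have hn' : (6 : ℝ) ≤ n := by exact_mod_cast hn
  have hA := integral_fderiv_sq_mul_rotated_le hf hu hu0 hij hik hjk s
  have hB := integral_fderiv_sq_mul hf hu hik
  have hBr := integral_fderiv_sq_mul_rotated hf hu hij hik hjk s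
  have h3 : derivPairing f g i j k s ≤ ∫ v, (4 / 9 * (fderiv ℝ f (v i) (v k) ^ 2 *
        u (Real.cos s • v i + Real.sin s • v j)) +
      9 / 16 * (fderiv ℝ f (Real.cos s • v i + Real.sin s • v j) (v k) ^ 2 *
        u (Real.cos s • v i + Real.sin s • v j))) ∂frameMeasure n := by
    simp only [derivPairing, hgu, smul_apply, smul_eq_mul]
    refine integral_frame_mono (by fun_prop) (by fun_prop) fun v _ => ?_
    have := mul_nonneg (hu0 (Real.cos s • v i + Real.sin s • v j))
      (sq_nonneg (fderiv ℝ f (v i) (v k) - 9 / 8 *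
          fderiv ℝ f (Real.cos s • v i + Real.sin s • v j) (v k)))
    nlinarith
  rw [integral_add (integrable_frameMeasure (by fun_prop)) (integrable_frameMeasure (by fun_prop)),
    integral_const_mul, integral_const_mul, hBr] at h3
  have hA0 : 0 ≤ ∫ v, ‖sgrad f (v i)‖ ^ 2 * u (Real.cos s • v i + Real.sin s • v j)
    ∂frameMeasure n := integral_nonneg fun v => mul_nonneg (sq_nonneg _) (hu0 _)
  set a := ∫ v, fderiv ℝ f (v i) (v k) ^ 2 * u (Real.cos s • v i + Real.sin s • v j)
    ∂frameMeasure n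
  set A := ∫ v, ‖sgrad f (v i)‖ ^ 2 * u (Real.cos s • v i + Real.sin s • v j) ∂frameMeasure n
  rw [← hB]
  set c := ∫ v, fderiv ℝ f (v i) (v k) ^ 2 * u (v i) ∂frameMeasure n
  refine h3.trans ?_
  have ha : a ≤ A / (n - 2) := by rw [le_div_iff₀ (by linarith)]; linarith
  have hA2 : A / (n - 2) ≤ 5 / 4 * (A / (n - 1)) := by
    rw [← mul_div_assoc, div_le_div_iff₀ (by linarith) (by linarith)]
    nlinarith
  have e : 9 / (8 * ((n : ℝ) - 1)) / 2 * (A + (n - 1) * c) =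
      9 / 16 * (A / (n - 1)) + 9 / 16 * c := by
    have : (n : ℝ) - 1 ≠ 0 := by linarith
    field_simp
    ring
  rw [e]
  have : 0 ≤ A / ((n : ℝ) - 1) := div_nonneg hA0 (by linarith)
  linarith

end Consequences

section Exponential

lemma exists_three_indices (hn : 3 ≤ n) : ∃ i j k : Fin n, i ≠ j ∧ i ≠ k ∧ j ≠ k :=
  ⟨⟨0, by omega⟩, ⟨1, by omega⟩, ⟨2, by omega⟩, by simp, by simp, by simp⟩

variable [NeZero n] {f : E n → ℝ}

/-- Covariance of a `1`-Lipschitz function with a nondecreasing function of it. -/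
theorem covariance_comp_le (hn : 6 ≤ n) (hf : ContDiff ℝ 1 f)
    (hlip : ∀ x ∈ sphere (0 : E n) 1, ‖sgrad f x‖ ≤ 1) {h : ℝ → ℝ} (hh : ContDiff ℝ 1 h)
    (hmono : ∀ x, 0 ≤ deriv h x) :
    ∫ x, f x * h (f x) ∂sphMeasure n ≤
      (∫ x, f x ∂sphMeasure n) * (∫ x, h (f x) ∂sphMeasure n) +
        9 / (8 * ((n : ℝ) - 1)) * ∫ x, deriv h (f x) ∂sphMeasure n := by
  obtain ⟨i, j, k, hij, hik, hjk⟩ := exists_three_indices (by omega : 3 ≤ n)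
  have hh' : Continuous (deriv h) := hh.continuous_deriv_one
  have hfc := hf.continuous
  have hsg := continuous_sgrad hf
  have hn' : (6 : ℝ) ≤ n := by exact_mod_cast hn
  have hgu : ∀ x, fderiv ℝ (fun x => h (f x)) x = deriv h (f x) • fderiv ℝ f x := fun x =>
    ((hh.differentiable one_ne_zero _).hasDerivAt.comp_hasFDerivAt x
      (hf.differentiable one_ne_zero x).hasFDerivAt).fderiv
  refine covariance_le (g := fun x => h (f x)) hf (hh.comp hf) hij hik hjk fun s =>
    (derivPairing_le hn hf (u := fun x => deriv h (f x)) (by fun_prop) (fun x => hmono _) hgu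
      hij hik hjk s).trans ?_
  have hb : ∀ v : Fin n → E n, Orthonormal ℝ v → ‖sgrad f (v i)‖ ^ 2 ≤ 1 := fun v hv =>
    pow_le_one₀ (norm_nonneg _) (hlip _ (by simpa using hv.1 i))
  have e1 : ∫ v, ‖sgrad f (v i)‖ ^ 2 * deriv h (f (Real.cos s • v i + Real.sin s • v j))
      ∂frameMeasure n ≤ ∫ x, deriv h (f x) ∂sphMeasure n := by
    rw [integral_sphMeasure (φ := fun x => deriv h (f x)) (by fun_prop) i,
      ← integral_rotFrame (Φ := fun v => deriv h (f (v i))) (by fun_prop) hij s]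
    refine integral_frame_mono (by fun_prop) (by unfold rotFrame; simp; fun_prop) fun v hv => ?_
    simp only [rotFrame, if_true]
    exact mul_le_of_le_one_left (hmono _) (hb v hv)
  have e2 : ∫ x, ‖sgrad f x‖ ^ 2 * deriv h (f x) ∂sphMeasure n ≤
      ∫ x, deriv h (f x) ∂sphMeasure n := by
    rw [integral_sphMeasure (φ := fun x => deriv h (f x)) (by fun_prop) i,
      integral_sphMeasure (φ := fun x => ‖sgrad f x‖ ^ 2 * deriv h (f x)) (by fun_prop) i]
    exact integral_frame_mono (by fun_prop) (by fun_prop) fun v hv =>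
      mul_le_of_le_one_left (hmono _) (hb v hv)
  have hk : 0 ≤ 9 / (8 * ((n : ℝ) - 1)) := by
    have : (0 : ℝ) < n - 1 := by linarith
    positivity
  nlinarith [mul_le_mul_of_nonneg_left (add_le_add e1 e2) hk]

/-- Comparison of exponential moments of a function and of its squared gradient. -/
theorem integral_exp_le_integral_exp_sgrad (hn : 6 ≤ n) (hf : ContDiff ℝ 1 f)
    (hmean : ∫ x, f x ∂sphMeasure n = 0) :
    ∫ x, Real.exp (f x) ∂sphMeasure n ≤
      ∫ x, Real.exp (9 / (8 * ((n : ℝ) - 1)) * ‖sgrad f x‖ ^ 2) ∂sphMeasure n := by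
  obtain ⟨i, j, k, hij, hik, hjk⟩ := exists_three_indices (by omega : 3 ≤ n)
  have hfc := hf.continuous
  have hsg := continuous_sgrad hf
  have hn' : (6 : ℝ) ≤ n := by exact_mod_cast hn
  set κ := 9 / (8 * ((n : ℝ) - 1)) with hκ
  set Λ := ∫ x, Real.exp (f x) ∂sphMeasure n with hΛ
  set M := ∫ x, Real.exp (κ * ‖sgrad f x‖ ^ 2) ∂sphMeasure n with hM
  have hΛ0 : 0 < Λ := integral_exp_pos (integrable_sphMeasure (by fun_prop))
  have hM0 : 0 < M := integral_exp_pos (integrable_sphMeasure (by fun_prop))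
  set I := ∫ x, f x * Real.exp (f x) ∂sphMeasure n with hI
  have hpt : ∀ a b : ℝ, κ * a * Real.exp b ≤ (b * Real.exp b + (Real.log M - Real.log Λ - 1) *
      Real.exp b) + Λ / M * Real.exp (κ * a) := by
    intro a b
    have h := Real.add_one_le_exp (κ * a - Real.log M - (b - Real.log Λ))
    have h1 : Real.exp (κ * a - Real.log M - (b - Real.log Λ)) =
        Λ / M * Real.exp (κ * a) / Real.exp b := by
      rw [Real.exp_sub, Real.exp_sub, Real.exp_sub, Real.exp_log hM0, Real.exp_log hΛ0]
      field_simp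
    rw [h1, le_div_iff₀ (Real.exp_pos b)] at h
    linarith
  have hbd : ∀ s, κ * ∫ v, ‖sgrad f (v i)‖ ^ 2 *
      Real.exp (f (Real.cos s • v i + Real.sin s • v j)) ∂frameMeasure n ≤
        I + (Real.log M - Real.log Λ) * Λ := by
    intro s
    have h1 : ∫ v, Real.exp (f (Real.cos s • v i + Real.sin s • v j)) ∂frameMeasure n = Λ := by
      rw [hΛ, integral_sphMeasure (φ := fun x => Real.exp (f x)) (by fun_prop) i,
        ← integral_rotFrame (Φ := fun v => Real.exp (f (v i))) (by fun_prop) hij s]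
      simp [rotFrame]
    have h2 : ∫ v, f (Real.cos s • v i + Real.sin s • v j) *
        Real.exp (f (Real.cos s • v i + Real.sin s • v j)) ∂frameMeasure n = I := by
      rw [hI, integral_sphMeasure (φ := fun x => f x * Real.exp (f x)) (by fun_prop) i,
        ← integral_rotFrame (Φ := fun v => f (v i) * Real.exp (f (v i))) (by fun_prop) hij s]
      simp [rotFrame]
    have h3 : ∫ v, Real.exp (κ * ‖sgrad f (v i)‖ ^ 2) ∂frameMeasure n = M := by
      rw [hM, integral_sphMeasure (φ := fun x => Real.exp (κ * ‖sgrad f x‖ ^ 2)) (by fun_prop) i]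
    have h4 := integral_frame_mono
      (Φ := fun v => κ * (‖sgrad f (v i)‖ ^ 2 *
        Real.exp (f (Real.cos s • v i + Real.sin s • v j))))
      (Ψ := fun v => (f (Real.cos s • v i + Real.sin s • v j) *
        Real.exp (f (Real.cos s • v i + Real.sin s • v j)) + (Real.log M - Real.log Λ - 1) *
        Real.exp (f (Real.cos s • v i + Real.sin s • v j))) +
        Λ / M * Real.exp (κ * ‖sgrad f (v i)‖ ^ 2)) (by fun_prop) (by fun_prop)
      fun v _ => by
        have := hpt (‖sgrad f (v i)‖ ^ 2) (f (Real.cos s • v i + Real.sin s • v j))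
        linarith
    rw [integral_const_mul, integral_add (integrable_frameMeasure (by fun_prop))
      (integrable_frameMeasure (by fun_prop)), integral_add (integrable_frameMeasure (by fun_prop))
      (integrable_frameMeasure (by fun_prop)), integral_const_mul, integral_const_mul, h1, h2,
      h3, div_mul_cancel₀ _ hM0.ne'] at h4
    linarith
  have hgu : ∀ x, fderiv ℝ (fun x => Real.exp (f x)) x = Real.exp (f x) • fderiv ℝ f x := fun x =>
    (hf.differentiable one_ne_zero x).hasFDerivAt.exp.fderiv
  have hcov := covariance_le (g := fun x => Real.exp (f x))
    (K := I + (Real.log M - Real.log Λ) * Λ) hf hf.exp hij hik hjk fun s => by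
      refine (derivPairing_le hn hf (u := fun x => Real.exp (f x)) (by fun_prop)
        (fun x => (Real.exp_pos _).le) hgu hij hik hjk s).trans ?_
      have h0 := hbd 0
      simp only [Real.cos_zero, Real.sin_zero, one_smul, zero_smul, add_zero] at h0
      rw [integral_sphMeasure (φ := fun x => ‖sgrad f x‖ ^ 2 * Real.exp (f x)) (by fun_prop) i]
      linarith [hbd s]
  rw [hmean, zero_mul, zero_add] at hcov
  have hlog : 0 ≤ Real.log M - Real.log Λ := by
    by_contra! hneg
    have := mul_neg_of_neg_of_pos hneg hΛ0
    change I ≤ _ at hcov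
    linarith
  exact (Real.log_le_log_iff hΛ0 hM0).1 (by linarith)

end Exponential

section SquareExponential

variable [NeZero n] {g : E n → ℝ}

lemma hasDerivAt_integral_exp_sq (hg : Continuous g) (s : ℝ) :
    HasDerivAt (fun s => ∫ x, (Real.exp (s * g x ^ 2) - 1) ∂sphMeasure n)
      (∫ x, g x ^ 2 * Real.exp (s * g x ^ 2) ∂sphMeasure n) s := by
  have i : Fin n := 0
  have h1 : ∀ s, ∫ x, (Real.exp (s * g x ^ 2) - 1) ∂sphMeasure n =
      ∫ v, (Real.exp (s * g (v i) ^ 2) - 1) ∂frameMeasure n := fun s =>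
    integral_sphMeasure (φ := fun x => Real.exp (s * g x ^ 2) - 1) (by fun_prop) i
  simp_rw [h1]
  rw [integral_sphMeasure (φ := fun x => g x ^ 2 * Real.exp (s * g x ^ 2)) (by fun_prop) i]
  refine hasDerivAt_integral_frame (F := fun s v => Real.exp (s * g (v i) ^ 2) - 1)
    (F' := fun s v => g (v i) ^ 2 * Real.exp (s * g (v i) ^ 2)) (fun s => by fun_prop)
    (by fun_prop) (fun s v => ?_) s
  simpa [mul_comm] using (((hasDerivAt_id s).mul_const (g (v i) ^ 2)).exp).sub_const 1

lemma integral_sq_mul_exp_le (hn : 6 ≤ n) (hg : ContDiff ℝ 1 g)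
    (hlip : ∀ x ∈ sphere (0 : E n) 1, ‖sgrad g x‖ ≤ 1)
    (hA : ∫ x, g x ^ 2 ∂sphMeasure n ≤ 27 / (20 * ((n : ℝ) - 1))) {s : ℝ} (hs : 0 ≤ s) :
    (7 / 10 - 9 / (4 * ((n : ℝ) - 1)) * s) *
        ∫ x, g x ^ 2 * Real.exp (s * g x ^ 2) ∂sphMeasure n ≤
      7 / 10 * ∫ x, g x ^ 2 ∂sphMeasure n +
        9 / (4 * ((n : ℝ) - 1)) * ∫ x, (Real.exp (s * g x ^ 2) - 1) ∂sphMeasure n := by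
  have hgc := hg.continuous
  have hn' : (6 : ℝ) ≤ n := by exact_mod_cast hn
  have hd : ∀ x, HasDerivAt (fun x : ℝ => x * (Real.exp (s * x ^ 2) - 1))
      ((Real.exp (s * x ^ 2) - 1) + 2 * s * (x ^ 2 * Real.exp (s * x ^ 2))) x := by
    intro x
    have := (hasDerivAt_id x).mul (((((hasDerivAt_id x).pow 2).const_mul s).exp).sub_const 1)
    refine this.congr_deriv ?_
    simp only [id, Pi.pow_apply]
    push_cast
    ring
  have hu : ∀ x : ℝ, 0 ≤ Real.exp (s * x ^ 2) - 1 := fun x => by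
    rw [sub_nonneg]; exact Real.one_le_exp (by positivity)
  have hcov := covariance_comp_le hn hg hlip (h := fun x => x * (Real.exp (s * x ^ 2) - 1))
    (by fun_prop) (fun x => by
      rw [(hd x).deriv]
      exact add_nonneg (hu x) (by positivity))
  simp only [(hd _).deriv] at hcov
  set κ := 9 / (8 * ((n : ℝ) - 1)) with hκ
  have hκ0 : 0 < κ := by
    have : (0 : ℝ) < n - 1 := by linarith
    positivity
  have hκ2 : 9 / (4 * ((n : ℝ) - 1)) = 2 * κ := by
    rw [hκ]; field_simp; ring
  have hκ3 : 27 / (20 * ((n : ℝ) - 1)) = 6 / 5 * κ := by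
    rw [hκ]; field_simp; ring
  rw [hκ3] at hA
  rw [hκ2]
  set y := ∫ x, (Real.exp (s * g x ^ 2) - 1) ∂sphMeasure n with hy
  set z := ∫ x, g x ^ 2 * Real.exp (s * g x ^ 2) ∂sphMeasure n with hz
  set a := ∫ x, g x ^ 2 ∂sphMeasure n with ha
  set m := ∫ x, g x ∂sphMeasure n with hm
  have hy0 : 0 ≤ y := integral_nonneg fun x => hu _
  have hma : m ^ 2 ≤ a := by
    have h0 : 0 ≤ ∫ x, (g x - m) ^ 2 ∂sphMeasure n := integral_nonneg fun x => sq_nonneg _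
    have e : ∀ x, (g x - m) ^ 2 = g x ^ 2 - 2 * m * g x + m ^ 2 := fun x => by ring
    simp_rw [e] at h0
    rw [integral_add (integrable_sphMeasure (by fun_prop)) (integrable_const _),
      integral_sub (integrable_sphMeasure (by fun_prop)) (integrable_sphMeasure (by fun_prop)),
      integral_const_mul] at h0
    simp only [integral_const, probReal_univ, one_smul] at h0
    nlinarith
  have hl : ∫ x, g x * (g x * (Real.exp (s * g x ^ 2) - 1)) ∂sphMeasure n = z - a := by
    rw [hz, ha, ← integral_sub (integrable_sphMeasure (by fun_prop))
      (integrable_sphMeasure (by fun_prop))]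
    congr with x
    ring
  have hr : ∫ x, ((Real.exp (s * g x ^ 2) - 1) + 2 * s * (g x ^ 2 * Real.exp (s * g x ^ 2)))
      ∂sphMeasure n = y + 2 * s * z := by
    rw [integral_add (integrable_sphMeasure (by fun_prop)) (integrable_sphMeasure (by fun_prop)),
      integral_const_mul]
  have hmid : m * ∫ x, g x * (Real.exp (s * g x ^ 2) - 1) ∂sphMeasure n ≤
      3 / 10 * (z - a) + 5 / 6 * m ^ 2 * y := by
    rw [← hl, ← integral_const_mul, ← integral_const_mul, hy, ← integral_const_mul,
      ← integral_add (integrable_sphMeasure (by fun_prop)) (integrable_sphMeasure (by fun_prop))]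
    refine integral_mono (integrable_sphMeasure (by fun_prop))
      (integrable_sphMeasure (by fun_prop)) fun x => ?_
    have h1 : m * g x ≤ 3 / 10 * g x ^ 2 + 5 / 6 * m ^ 2 := by
      nlinarith [sq_nonneg (3 * g x - 5 * m)]
    have := mul_le_mul_of_nonneg_right h1 (hu (g x))
    linarith
  rw [hl, hr] at hcov
  have hm2 : 5 / 6 * m ^ 2 * y ≤ κ * y := mul_le_mul_of_nonneg_right (by linarith) hy0
  linarith

/-- Exponential moment of the square of a `1`-Lipschitz function of small `L²` norm. -/
theorem integral_exp_sq_le (hn : 6 ≤ n) (hg : ContDiff ℝ 1 g)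
    (hlip : ∀ x ∈ sphere (0 : E n) 1, ‖sgrad g x‖ ≤ 1)
    (hA : ∫ x, g x ^ 2 ∂sphMeasure n ≤ 27 / (20 * ((n : ℝ) - 1))) {s : ℝ} (hs : 0 ≤ s) :
    (7 / 10 - 9 / (4 * ((n : ℝ) - 1)) * s) *
        ∫ x, (Real.exp (s * g x ^ 2) - 1) ∂sphMeasure n ≤
      7 / 10 * s * ∫ x, g x ^ 2 ∂sphMeasure n := by
  set κ := 9 / (4 * ((n : ℝ) - 1)) with hκ
  set a := ∫ x, g x ^ 2 ∂sphMeasure n with ha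
  set y : ℝ → ℝ := fun s => ∫ x, (Real.exp (s * g x ^ 2) - 1) ∂sphMeasure n with hy
  have hD : ∀ s, HasDerivAt (fun s => 7 / 10 * s * a - (7 / 10 - κ * s) * y s)
      (7 / 10 * a - (-κ * y s + (7 / 10 - κ * s) *
        ∫ x, g x ^ 2 * Real.exp (s * g x ^ 2) ∂sphMeasure n)) s := by
    intro s
    have h1 : HasDerivAt (fun s => 7 / 10 * s * a) (7 / 10 * a) s := by
      simpa using ((hasDerivAt_id s).const_mul (7 / 10)).mul_const a
    have h2 : HasDerivAt (fun s => 7 / 10 - κ * s) (-κ) s := by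
      simpa using ((hasDerivAt_id s).const_mul κ).const_sub (7 / 10)
    exact h1.sub (h2.mul (hasDerivAt_integral_exp_sq hg.continuous s))
  have hm := monotoneOn_of_deriv_nonneg (convex_Ici (0 : ℝ))
    (fun t _ => (hD t).continuousAt.continuousWithinAt)
    (fun t _ => (hD t).differentiableAt.differentiableWithinAt) (fun t ht => by
      rw [interior_Ici] at ht
      rw [(hD t).deriv]
      have := integral_sq_mul_exp_le hn hg hlip hA (le_of_lt ht)
      linarith)
  have := hm (Set.self_mem_Ici) hs hs
  simpa [hy] using this

end SquareExponential

section SecondOrder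

lemma sum_norm_sq_of_orthonormal (A : E n →L[ℝ] E n) {v : Fin n → E n} (hv : Orthonormal ℝ v) :
    ∑ k, ‖A (v k)‖ ^ 2 = hsNormSq A := by
  have key : ∀ w : Fin n → E n, Orthonormal ℝ w → ∑ k, ‖A (w k)‖ ^ 2 =
      ∑ a, ‖ContinuousLinearMap.adjoint A (EuclideanSpace.single a (1 : ℝ))‖ ^ 2 := by
    intro w hw
    have h : ∀ k, ‖A (w k)‖ ^ 2 = ∑ a, ⟪A (w k), EuclideanSpace.single a (1 : ℝ)⟫ ^ 2 := fun k => by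
      rw [sum_inner_sq_of_orthonormal (EuclideanSpace.orthonormal_single)]
    simp_rw [h]
    rw [Finset.sum_comm]
    refine Finset.sum_congr rfl fun a _ => ?_
    rw [← sum_inner_sq_of_orthonormal hw]
    refine Finset.sum_congr rfl fun k _ => ?_
    rw [← ContinuousLinearMap.adjoint_inner_right, real_inner_comm]
  rw [key v hv, ← key _ EuclideanSpace.orthonormal_single, hsNormSq]

variable {f : E n → ℝ}

lemma contDiff_gradient (hf : ContDiff ℝ 2 f) : ContDiff ℝ 1 (gradient f) := by
  have : ContDiff ℝ 1 (fderiv ℝ f) := hf.fderiv_right (by norm_num)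
  exact (InnerProductSpace.toDual ℝ (E n)).symm.contDiff.comp this

lemma contDiff_sgrad (hf : ContDiff ℝ 2 f) : ContDiff ℝ 1 (sgrad f) := by
  have := contDiff_gradient hf
  exact this.sub ((this.inner ℝ contDiff_id).smul contDiff_id)

lemma sHess_apply (f : E n → ℝ) {x w : E n} (h : ⟪x, w⟫ = 0) :
    sHess f x w = hess f x w - ⟪gradient f x, x⟫ • w - ⟪x, hess f x w⟫ • x := by
  simp [sHess, projPerp, h]
  abel

lemma sHess_self (f : E n → ℝ) {x : E n} (h : ‖x‖ = 1) : sHess f x x = 0 := by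
  simp [sHess, projPerp, h]

lemma inner_sHess (f : E n → ℝ) {x : E n} (h : ‖x‖ = 1) (w : E n) : ⟪x, sHess f x w⟫ = 0 := by
  simp [sHess, projPerp, h, inner_sub_right, real_inner_smul_right]

lemma fderiv_sgrad_apply (hf : ContDiff ℝ 2 f) {x w : E n} (h : ⟪x, w⟫ = 0) :
    fderiv ℝ (sgrad f) x w = sHess f x w - ⟪sgrad f x, w⟫ • x := by
  have hg : HasFDerivAt (gradient f) (hess f x) x :=
    ((contDiff_gradient hf).differentiable one_ne_zero x).hasFDerivAt
  have h1 := (hg.sub ((hg.inner ℝ (hasFDerivAt_id x)).smul (hasFDerivAt_id x))).fderiv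
  have h2 : fderiv ℝ (sgrad f) x w = _ := congrArg (fun T => T w) h1
  rw [h2, sHess_apply f h, inner_sgrad f h, ← inner_gradient_eq]
  simp [fderivInnerCLM_apply, add_smul]
  rw [real_inner_comm x]
  module

lemma norm_sq_fderiv_sgrad (hf : ContDiff ℝ 2 f) {x w : E n} (hx : ‖x‖ = 1) (h : ⟪x, w⟫ = 0) :
    ‖fderiv ℝ (sgrad f) x w‖ ^ 2 = ‖sHess f x w‖ ^ 2 + ⟪sgrad f x, w⟫ ^ 2 := by
  rw [fderiv_sgrad_apply hf h, norm_sub_sq_real, real_inner_smul_right,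
    real_inner_comm x (sHess f x w), inner_sHess f hx, norm_smul, hx]
  simp

lemma exists_frame_apply_eq (i : Fin n) {x : E n} (hx : ‖x‖ = 1) :
    ∃ v : Fin n → E n, Orthonormal ℝ v ∧ v i = x := by
  obtain ⟨W, hW, h⟩ := exists_orthogonal_row_eq i hx
  exact ⟨rowVec W, orthonormal_rowVec hW, h⟩

lemma sum_norm_sq_sgrad_sgrad (hf : ContDiff ℝ 2 f) (i : Fin n) {x : E n} (hx : ‖x‖ = 1) :
    ∑ a, ‖sgrad (fun x => sgrad f x a) x‖ ^ 2 = hsNormSq (sHess f x) + ‖sgrad f x‖ ^ 2 := by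
  obtain ⟨v, hv, rfl⟩ := exists_frame_apply_eq i hx
  have hd : DifferentiableAt ℝ (sgrad f) (v i) := (contDiff_sgrad hf).differentiable one_ne_zero _
  have h1 : ∀ a w, fderiv ℝ (fun x => sgrad f x a) (v i) w = fderiv ℝ (sgrad f) (v i) w a := by
    intro a w
    have := ((EuclideanSpace.proj (𝕜 := ℝ) a).hasFDerivAt.comp (v i) hd.hasFDerivAt).fderiv
    exact congrArg (fun T => T w) this
  have h0 : ∀ a, ‖sgrad (fun x => sgrad f x a) (v i)‖ ^ 2 =
      ∑ k ∈ Finset.univ.erase i, fderiv ℝ (sgrad f) (v i) (v k) a ^ 2 := fun a => by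
    simp_rw [← sum_fderiv_sq hv, h1]
  simp_rw [h0]
  rw [Finset.sum_comm]
  have h2 : ∀ k ∈ Finset.univ.erase i, ∑ a, fderiv ℝ (sgrad f) (v i) (v k) a ^ 2 =
      ‖sHess f (v i) (v k)‖ ^ 2 + ⟪sgrad f (v i), v k⟫ ^ 2 := fun k hk => by
    rw [← norm_sq_fderiv_sgrad hf hx (hv.2 (Finset.ne_of_mem_erase hk).symm),
      EuclideanSpace.real_norm_sq_eq]
  rw [Finset.sum_congr rfl h2, Finset.sum_add_distrib, ← sum_norm_sq_of_orthonormal _ hv,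
    ← sum_inner_sq_of_orthonormal hv, ← Finset.add_sum_erase _ _ (Finset.mem_univ i),
    ← Finset.add_sum_erase (a := i) _ (fun k => ⟪sgrad f (v i), v k⟫ ^ 2) (Finset.mem_univ i),
    sHess_self f hx, inner_sgrad_self f hx]
  simp

lemma continuous_hsNormSq_sHess (hf : ContDiff ℝ 2 f) :
    Continuous fun x => hsNormSq (sHess f x) := by
  have h1 := (contDiff_gradient hf).continuous
  have h2 : Continuous (hess f) := (contDiff_gradient hf).continuous_fderiv one_ne_zero
  have h3 : Continuous (fderiv ℝ f) := hf.continuous_fderiv two_ne_zero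
  simp only [hsNormSq, sHess, projPerp]
  simp
  fun_prop

variable [NeZero n]

lemma integral_inner_sgrad_eq_zero (hf : ContDiff ℝ 1 f)
    (hlin : ∀ e : E n, ∫ x, ⟪e, x⟫ * f x ∂sphMeasure n = 0) (e : E n) :
    ∫ x, ⟪sgrad f x, e⟫ ∂sphMeasure n = 0 := by
  have hfc := hf.continuous
  have hf' : Continuous (fderiv ℝ f) := hf.continuous_fderiv one_ne_zero
  have hsg := continuous_sgrad hf
  have i : Fin n := 0
  have h1 : ∀ j ∈ Finset.univ.erase i,
      ∫ v, fderiv ℝ f (v i) (v j) * ⟪v j, e⟫ ∂frameMeasure n = 0 := by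
    intro j hj
    have hij : i ≠ j := (Finset.ne_of_mem_erase hj).symm
    have hD := hasDerivAt_integral_frame
      (F := fun s v => f (Real.cos s • v i + Real.sin s • v j) *
        (Real.cos s * ⟪v j, e⟫ - Real.sin s * ⟪v i, e⟫))
      (F' := fun s v => fderiv ℝ f (Real.cos s • v i + Real.sin s • v j)
          (-Real.sin s • v i + Real.cos s • v j) *
          (Real.cos s * ⟪v j, e⟫ - Real.sin s * ⟪v i, e⟫) +
        f (Real.cos s • v i + Real.sin s • v j) *
          (-Real.sin s * ⟪v j, e⟫ - Real.cos s * ⟪v i, e⟫))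
      (fun s => by fun_prop) (by fun_prop)
      (fun s v => (((hf.differentiable one_ne_zero _).hasFDerivAt).comp_hasDerivAt s
        (((Real.hasDerivAt_cos s).smul_const (v i)).add
          ((Real.hasDerivAt_sin s).smul_const (v j)))).mul
        (((Real.hasDerivAt_cos s).mul_const _).sub ((Real.hasDerivAt_sin s).mul_const _))) 0
    have hc : ∀ s, ∫ v, f (Real.cos s • v i + Real.sin s • v j) *
        (Real.cos s * ⟪v j, e⟫ - Real.sin s * ⟪v i, e⟫) ∂frameMeasure n =
        ∫ v, f (v i) * ⟪v j, e⟫ ∂frameMeasure n := fun s => by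
      rw [← integral_rotFrame (Φ := fun v => f (v i) * ⟪v j, e⟫) (by fun_prop) hij s]
      simp [rotFrame, hij.symm, inner_sub_left, real_inner_smul_left]
    rw [funext hc] at hD
    have h0 := hD.unique (hasDerivAt_const _ _)
    simp only [Real.cos_zero, Real.sin_zero, one_smul, zero_smul, add_zero, neg_zero, zero_add,
      one_mul, zero_mul, sub_zero, zero_sub, mul_neg, ← sub_eq_add_neg] at h0
    rw [integral_sub (integrable_frameMeasure (by fun_prop)) (integrable_frameMeasure
      (by fun_prop)), sub_eq_zero] at h0
    rw [h0, ← hlin e, integral_sphMeasure (φ := fun x => ⟪e, x⟫ * f x) (by fun_prop) i]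
    congr with v
    rw [real_inner_comm, mul_comm]
  rw [integral_sphMeasure (φ := fun x => ⟪sgrad f x, e⟫) (by fun_prop) i,
    ← Finset.sum_eq_zero h1,
    ← integral_finsetSum _ fun j _ => integrable_frameMeasure (by fun_prop)]
  refine integral_congr_ae ?_
  filter_upwards [ae_orthonormal] with v hv
  have := (OrthonormalBasis.mk hv (by
    rw [hv.linearIndependent.span_eq_top_of_card_eq_finrank' (by simp)])).sum_inner_mul_inner
      (sgrad f (v i)) e
  simp only [OrthonormalBasis.coe_mk] at this
  rw [← this, ← Finset.add_sum_erase _ _ (Finset.mem_univ i), inner_sgrad_self f (hv.1 i),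
    zero_mul, zero_add]
  exact Finset.sum_congr rfl fun j hj => by
    rw [inner_sgrad f (hv.2 (Finset.ne_of_mem_erase hj).symm)]

/-- Second order Poincaré inequality on the sphere. -/
theorem second_order_poincare (hn : 3 ≤ n) (hf : ContDiff ℝ 2 f)
    (hlin : ∀ e : E n, ∫ x, ⟪e, x⟫ * f x ∂sphMeasure n = 0) :
    ((n : ℝ) - 2) * ∫ x, ‖sgrad f x‖ ^ 2 ∂sphMeasure n ≤
      ∫ x, hsNormSq (sHess f x) ∂sphMeasure n := by
  obtain ⟨i, j, k, hij, hik, hjk⟩ := exists_three_indices hn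
  have hs := contDiff_sgrad hf
  have hsc := hs.continuous
  have hc : ∀ a, ContDiff ℝ 1 fun x => sgrad f x a := fun a => by fun_prop
  have hcs : ∀ a, Continuous (sgrad fun x => sgrad f x a) := fun a => continuous_sgrad (hc a)
  have hH := continuous_hsNormSq_sHess hf
  have h1 : ∀ a, ((n : ℝ) - 1) * ∫ x, sgrad f x a ^ 2 ∂sphMeasure n ≤
      ∫ x, ‖sgrad (fun x => sgrad f x a) x‖ ^ 2 ∂sphMeasure n := by
    intro a
    have h := poincare_sphere (hc a) hij hik hjk
    have h0 := integral_inner_sgrad_eq_zero (hf.of_le one_le_two) hlin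
      (EuclideanSpace.single a (1 : ℝ))
    simp only [EuclideanSpace.inner_single_right, one_mul, conj_trivial] at h0
    rw [h0] at h
    simpa using h
  have h2 := Finset.sum_le_sum fun a (_ : a ∈ Finset.univ) => h1 a
  rw [← Finset.mul_sum, ← integral_finsetSum _ fun a _ => integrable_sphMeasure (by fun_prop),
    ← integral_finsetSum _ fun a _ => integrable_sphMeasure (by fun_prop)] at h2
  simp_rw [← EuclideanSpace.real_norm_sq_eq] at h2
  have h3 : ∫ x, ∑ a, ‖sgrad (fun x => sgrad f x a) x‖ ^ 2 ∂sphMeasure n =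
      ∫ x, (hsNormSq (sHess f x) + ‖sgrad f x‖ ^ 2) ∂sphMeasure n := by
    refine integral_congr_ae ?_
    filter_upwards [ae_sphMeasure_mem_sphere n] with x hx
    exact sum_norm_sq_sgrad_sgrad hf i (by simpa using hx)
  rw [h3, integral_add (integrable_sphMeasure hH) (integrable_sphMeasure (by fun_prop))] at h2
  linarith

end SecondOrder

section GlobalSmooth

variable {f : E n → ℝ}

lemma contDiff_sqrt_norm_sgrad_sq_add (hf : ContDiff ℝ 2 f) {η : ℝ} (hη : 0 < η) :
    ContDiff ℝ 1 fun x => √(‖sgrad f x‖ ^ 2 + η) :=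
  (((contDiff_sgrad hf).norm_sq ℝ).add contDiff_const).sqrt fun x => by positivity

lemma norm_sgrad_sqrt_norm_sgrad_sq_add_le (hf : ContDiff ℝ 2 f) {η : ℝ} (hη : 0 < η) {x : E n}
    (hx : ‖x‖ = 1) (hop : ‖sHess f x‖ ≤ 1) :
    ‖sgrad (fun x => √(‖sgrad f x‖ ^ 2 + η)) x‖ ≤ 1 := by
  set g : E n → ℝ := fun x => √(‖sgrad f x‖ ^ 2 + η) with hg
  set w := sgrad g x with hw
  have hxw : ⟪x, w⟫ = 0 := by rw [real_inner_comm, inner_sgrad_self g hx]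
  have hgpos : 0 < g x := Real.sqrt_pos.2 (by positivity)
  have hsg : ‖sgrad f x‖ ≤ g x := Real.le_sqrt_of_sq_le (by linarith)
  have hs : HasFDerivAt (sgrad f) (fderiv ℝ (sgrad f) x) x :=
    ((contDiff_sgrad hf).differentiable one_ne_zero x).hasFDerivAt
  have hd := ((hs.norm_sq.add_const η).sqrt (by positivity)).fderiv
  have h1 : fderiv ℝ g x w = ⟪sgrad f x, sHess f x w⟫ / g x := by
    have h2 : fderiv ℝ g x w = _ := congrArg (fun T => T w) hd
    rw [h2]
    simp only [smul_apply, ContinuousLinearMap.comp_apply, innerSL_apply_apply,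
      fderiv_sgrad_apply hf hxw, inner_sub_right, real_inner_smul_right, inner_sgrad_self f hx,
      smul_eq_mul, nsmul_eq_mul]
    change 1 / (2 * g x) * _ = _
    push_cast
    field_simp
    ring
  have h2 : ⟪sgrad f x, sHess f x w⟫ ≤ g x * ‖w‖ :=
    (real_inner_le_norm _ _).trans (mul_le_mul hsg (by
      simpa using (sHess f x).le_of_opNorm_le hop w) (norm_nonneg _) hgpos.le)
  have h3 : ‖w‖ ^ 2 ≤ ‖w‖ := by
    rw [← real_inner_self_eq_norm_sq, inner_sgrad g hxw, h1]
    exact (div_le_iff₀' hgpos).2 h2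
  nlinarith [norm_nonneg w]

lemma exp_abs_le (x : ℝ) : Real.exp |x| ≤ Real.exp x + Real.exp (-x) + x ^ 2 - 3 / 4 := by
  rcases abs_cases x with ⟨h, _⟩ | ⟨h, _⟩ <;> rw [h]
  · nlinarith [Real.add_one_le_exp (-x), sq_nonneg (x - 1 / 2)]
  · nlinarith [Real.add_one_le_exp x, sq_nonneg (x + 1 / 2)]

lemma sgrad_const_mul (hf : ContDiff ℝ 1 f) (c : ℝ) (x : E n) :
    sgrad (fun x => c * f x) x = c • sgrad f x := by
  have h : gradient (fun x => c * f x) x = c • gradient f x := by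
    simp [gradient, fderiv_const_mul (hf.differentiable one_ne_zero x)]
  simp only [sgrad, h, real_inner_smul_left, smul_sub, smul_smul]

variable [NeZero n]

lemma mul_integral_sq_le (hn : 3 ≤ n) (hf : ContDiff ℝ 2 f)
    (hmean : ∫ x, f x ∂sphMeasure n = 0)
    (hlin : ∀ e : E n, ∫ x, ⟪e, x⟫ * f x ∂sphMeasure n = 0) :
    ((n : ℝ) - 2) * (((n : ℝ) - 1) * ∫ x, f x ^ 2 ∂sphMeasure n) ≤
      ∫ x, hsNormSq (sHess f x) ∂sphMeasure n := by
  obtain ⟨i, j, k, hij, hik, hjk⟩ := exists_three_indices hn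
  have hn' : (3 : ℝ) ≤ n := by exact_mod_cast hn
  have h := poincare_sphere (hf.of_le one_le_two) hij hik hjk
  rw [hmean] at h
  refine le_trans (mul_le_mul_of_nonneg_left (h.trans_eq ?_) (by linarith))
    (second_order_poincare hn hf hlin)
  simp

lemma integral_exp_abs_le_two_of_le_one (hn : 6 ≤ n) (hf : ContDiff ℝ 2 f)
    (hmean : ∫ x, f x ∂sphMeasure n = 0)
    (hlin : ∀ e : E n, ∫ x, ⟪e, x⟫ * f x ∂sphMeasure n = 0)
    (hop : ∀ x ∈ Metric.sphere (0 : E n) 1, ‖sHess f x‖ ≤ 1) {β : ℝ} (hβ₀ : 0 ≤ β) (hβ₁ : β ≤ 1)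
    (hHS : ∫ x, hsNormSq (sHess f x) ∂sphMeasure n ≤ β) :
    ∫ x, Real.exp (((n : ℝ) - 1) / (2 * (1 + β)) * |f x|) ∂sphMeasure n ≤ 2 := by
  have hn' : (6 : ℝ) ≤ n := by exact_mod_cast hn
  have hf1 : ContDiff ℝ 1 f := hf.of_le one_le_two
  have hfc := hf.continuous
  have hsc := continuous_sgrad hf1
  have hP := second_order_poincare (by omega) hf hlin
  have hP2 := mul_integral_sq_le (by omega) hf hmean hlin
  set m : ℝ := (n : ℝ) - 1 with hm
  have hm5 : 5 ≤ m := by linarith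
  have hn2 : (n : ℝ) - 2 = m - 1 := by rw [hm]; ring
  rw [hn2] at hP hP2
  set r : ℝ := 1 + β with hr
  have hr0 : 0 < r := by linarith
  set t : ℝ := m / (2 * r) with ht
  set η : ℝ := 1 / (100 * m) with hη
  have hη0 : 0 < η := by positivity
  set g : E n → ℝ := fun x => √(‖sgrad f x‖ ^ 2 + η) with hg
  have hgC : ContDiff ℝ 1 g := contDiff_sqrt_norm_sgrad_sq_add hf hη0
  have hgc := hgC.continuous
  have hg2 : ∀ x, g x ^ 2 = ‖sgrad f x‖ ^ 2 + η := fun x => Real.sq_sqrt (by positivity)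
  have hlip : ∀ x ∈ Metric.sphere (0 : E n) 1, ‖sgrad g x‖ ≤ 1 := fun x hx =>
    norm_sgrad_sqrt_norm_sgrad_sq_add_le hf hη0 (by simpa using hx) (hop x hx)
  have hS : m * ∫ x, ‖sgrad f x‖ ^ 2 ∂sphMeasure n ≤ 5 / 4 * β := by
    have : 0 ≤ ∫ x, ‖sgrad f x‖ ^ 2 ∂sphMeasure n := integral_nonneg fun x => by positivity
    nlinarith
  have hA : m * ∫ x, g x ^ 2 ∂sphMeasure n ≤ 5 / 4 * β + 1 / 100 := by
    simp_rw [hg2]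
    rw [integral_add (integrable_sphMeasure (by fun_prop)) (integrable_const _)]
    simp only [integral_const, probReal_univ, one_smul, mul_add]
    have : m * η = 1 / 100 := by rw [hη]; field_simp
    linarith
  set s : ℝ := 9 / (8 * m) * t ^ 2 with hs
  have hs0 : 0 ≤ s := by positivity
  have hsr : s * r ^ 2 = 9 / 32 * m := by rw [hs, ht]; field_simp; norm_num
  have hX := integral_exp_sq_le hn hgC hlip
    (by rw [le_div_iff₀ (by positivity)]; linarith) hs0
  rw [← hm] at hX
  set A := ∫ x, g x ^ 2 ∂sphMeasure n with hAdef
  set y := ∫ x, (Real.exp (s * g x ^ 2) - 1) ∂sphMeasure n with hy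
  have hy1 : y ≤ 13 / 50 := by
    have h1 : (7 / 10 * r ^ 2 - 81 / 128) * y ≤ 63 / 320 * (5 / 4 * β + 1 / 100) := by
      have h2 := mul_le_mul_of_nonneg_left hX (sq_nonneg r)
      have h3 : r ^ 2 * ((7 / 10 - 9 / (4 * m) * s) * y) =
          (7 / 10 * r ^ 2 - 9 / (4 * m) * (s * r ^ 2)) * y := by ring
      have h4 : r ^ 2 * (7 / 10 * s * A) = 7 / 10 * (s * r ^ 2) * A := by ring
      rw [h3, h4, hsr] at h2
      have h5 : 9 / (4 * m) * (9 / 32 * m) = 81 / 128 := by field_simp; norm_num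
      rw [h5] at h2
      nlinarith
    have h6 : 0 < 7 / 10 * r ^ 2 - 81 / 128 := by nlinarith
    refine le_of_mul_le_mul_left (h1.trans ?_) h6
    nlinarith
  have hpm : ∀ c : ℝ, c ^ 2 = t ^ 2 → ∫ x, Real.exp (c * f x) ∂sphMeasure n ≤ 63 / 50 := by
    intro c hc
    have h := integral_exp_le_integral_exp_sgrad (f := fun x => c * f x) hn
      (contDiff_const.mul hf1) (by rw [integral_const_mul, hmean, mul_zero])
    refine h.trans ?_
    have h1 : ∀ x, Real.exp (9 / (8 * ((n : ℝ) - 1)) * ‖sgrad (fun x => c * f x) x‖ ^ 2) ≤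
        Real.exp (s * g x ^ 2) := fun x => by
      rw [Real.exp_le_exp, sgrad_const_mul hf1, norm_smul, mul_pow, Real.norm_eq_abs, sq_abs, hc,
        hg2, ← hm, ← mul_assoc, ← hs]
      exact mul_le_mul_of_nonneg_left (by linarith) hs0
    have hcs := continuous_sgrad (contDiff_const (c := c) |>.mul hf1)
    refine (integral_mono (integrable_sphMeasure (by fun_prop))
      (integrable_sphMeasure (by fun_prop)) h1).trans ?_
    rw [hy, integral_sub (integrable_sphMeasure (by fun_prop)) (integrable_const _)] at hy1
    simp only [integral_const, probReal_univ, one_smul] at hy1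
    linarith
  have hf2 : t ^ 2 * ∫ x, f x ^ 2 ∂sphMeasure n ≤ 5 / 64 := by
    have h0 : 0 ≤ ∫ x, f x ^ 2 ∂sphMeasure n := integral_nonneg fun x => by positivity
    have h1 : m ^ 2 * ∫ x, f x ^ 2 ∂sphMeasure n ≤ 5 / 4 * β := by
      nlinarith [mul_nonneg (by linarith : 0 ≤ m) h0]
    rw [ht, div_pow, div_mul_eq_mul_div, div_le_iff₀ (by positivity)]
    nlinarith [sq_nonneg (β - 1)]
  have h1 := hpm t rfl
  have h2 := hpm (-t) (by ring)
  calc ∫ x, Real.exp (t * |f x|) ∂sphMeasure n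
      ≤ ∫ x, (Real.exp (t * f x) + Real.exp (-t * f x) + (t ^ 2 * f x ^ 2 - 3 / 4))
          ∂sphMeasure n := by
        refine integral_mono (integrable_sphMeasure (by fun_prop))
          (integrable_sphMeasure (by fun_prop)) fun x => ?_
        have := exp_abs_le (t * f x)
        rw [abs_mul, abs_of_nonneg (by positivity)] at this
        simp only [neg_mul]
        linarith
    _ = ∫ x, Real.exp (t * f x) ∂sphMeasure n + ∫ x, Real.exp (-t * f x) ∂sphMeasure n +
          (t ^ 2 * ∫ x, f x ^ 2 ∂sphMeasure n - 3 / 4) := by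
        rw [integral_add (integrable_sphMeasure (by fun_prop))
            (integrable_sphMeasure (by fun_prop)),
          integral_add (integrable_sphMeasure (by fun_prop)) (integrable_sphMeasure (by fun_prop)),
          integral_sub (integrable_sphMeasure (by fun_prop)) (integrable_const _),
          integral_const_mul]
        simp
    _ ≤ 2 := by linarith

end GlobalSmooth

section Oscillation

lemma sub_sq_div_two_le {h h' h'' : ℝ → ℝ} (h1 : ∀ s, HasDerivAt h (h' s) s)
    (h2 : ∀ s, HasDerivAt h' (h'' s) s) (h3 : ∀ s, -1 ≤ h'' s) (h0 : h' 0 = 0) {s : ℝ}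
    (hs : 0 ≤ s) : h 0 - s ^ 2 / 2 ≤ h s := by
  have hu : Monotone fun s => h' s + s :=
    monotone_of_hasDerivAt_nonneg (fun s => (h2 s).add (hasDerivAt_id s)) fun s => by
      simpa using neg_le_iff_add_nonneg.1 (h3 s)
  have hv : ∀ s, HasDerivAt (fun s => h s + s ^ 2 / 2) (h' s + s) s := fun s =>
    ((h1 s).add (((hasDerivAt_id s).pow 2).div_const 2)).congr_deriv (by simp)
  have hm : MonotoneOn (fun s => h s + s ^ 2 / 2) (Set.Ici 0) :=
    monotoneOn_of_hasDerivWithinAt_nonneg (convex_Ici 0)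
      (fun s _ => (hv s).continuousAt.continuousWithinAt) (fun s _ => (hv s).hasDerivWithinAt)
      fun s hs => by
        have := hu (interior_subset hs : (0 : ℝ) ≤ s)
        simp only [h0, add_zero] at this
        exact this
  have := hm (Set.mem_Ici.2 le_rfl) (Set.mem_Ici.2 hs) hs
  simp only [ne_eq, OfNat.ofNat_ne_zero, not_false_eq_true, zero_pow, zero_div, add_zero] at this
  linarith

lemma norm_cos_smul_add_sin_smul {x v : E n} (hx : ‖x‖ = 1) (hv : ‖v‖ = 1) (hxv : ⟪x, v⟫ = 0)
    (s : ℝ) : ‖Real.cos s • x + Real.sin s • v‖ = 1 := by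
  have : ‖Real.cos s • x + Real.sin s • v‖ ^ 2 = 1 := by
    rw [norm_add_sq_real, real_inner_smul_left, real_inner_smul_right, hxv, norm_smul, norm_smul,
      hx, hv]
    simp
  simpa using (pow_eq_one_iff_of_nonneg (norm_nonneg _) two_ne_zero).1 this

lemma exists_eq_cos_smul_add_sin_smul (hn : 2 ≤ n) {x y : E n} (hx : ‖x‖ = 1) (hy : ‖y‖ = 1) :
    ∃ v : E n, ‖v‖ = 1 ∧ ⟪x, v⟫ = 0 ∧ ∃ θ ∈ Set.Icc 0 Real.pi,
      y = Real.cos θ • x + Real.sin θ • v := by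
  have hc := abs_le.1 ((abs_real_inner_le_norm x y).trans_eq (by rw [hx, hy, one_mul]))
  set c := ⟪x, y⟫ with hcdef
  set w := y - c • x with hw
  have hxw : ⟪x, w⟫ = 0 := by
    rw [hw, inner_sub_right, real_inner_smul_right, real_inner_self_eq_norm_sq, hx, ← hcdef]
    ring
  have hnw : ‖w‖ = Real.sin (Real.arccos c) := by
    have : ‖w‖ ^ 2 = 1 - c ^ 2 := by
      rw [hw, norm_sub_sq_real, real_inner_smul_right, real_inner_comm, norm_smul, hx, hy,
        ← hcdef, mul_one, Real.norm_eq_abs, sq_abs]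
      ring
    rw [Real.sin_arccos, ← this, Real.sqrt_sq (norm_nonneg _)]
  have hθ := Real.arccos_nonneg c
  have hθ' := Real.arccos_le_pi c
  have hcos := Real.cos_arccos hc.1 hc.2
  by_cases h0 : w = 0
  · obtain ⟨v, hv, hvx⟩ := exists_frame_apply_eq (⟨0, by omega⟩ : Fin n) hx
    refine ⟨v ⟨1, by omega⟩, hv.1 _, by rw [← hvx, hv.2 (by simp)], _, ⟨hθ, hθ'⟩, ?_⟩
    rw [hcos, ← hnw, h0, norm_zero, zero_smul, add_zero, ← sub_eq_zero, ← hw, h0]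
  · refine ⟨‖w‖⁻¹ • w, by simp [norm_smul, h0], by rw [real_inner_smul_right, hxw, mul_zero], _,
      ⟨hθ, hθ'⟩, ?_⟩
    rw [hcos, ← hnw, smul_smul, mul_inv_cancel₀ (norm_ne_zero_iff.2 h0), one_smul, hw]
    abel

variable {f : E n → ℝ}

lemma sub_sq_div_two_le_apply_of_isMaxOn (hf : ContDiff ℝ 2 f)
    (hop : ∀ x ∈ Metric.sphere (0 : E n) 1, ‖sHess f x‖ ≤ 1) {x v : E n} (hx : ‖x‖ = 1)
    (hmax : IsMaxOn f (Metric.sphere (0 : E n) 1) x) (hv : ‖v‖ = 1) (hxv : ⟪x, v⟫ = 0) {s : ℝ}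
    (hs : 0 ≤ s) : f x - s ^ 2 / 2 ≤ f (Real.cos s • x + Real.sin s • v) := by
  set c : ℝ → E n := fun s => Real.cos s • x + Real.sin s • v with hc
  set c' : ℝ → E n := fun s => -Real.sin s • x + Real.cos s • v with hc'
  have hnc : ∀ s, ‖c s‖ = 1 := norm_cos_smul_add_sin_smul hx hv hxv
  have hvx : ⟪v, x⟫ = 0 := by rw [real_inner_comm, hxv]
  have hnc' : ∀ s, ‖c' s‖ = 1 := fun s => by
    have := norm_cos_smul_add_sin_smul hv (norm_neg x ▸ hx)
      (by rw [inner_neg_right, hvx, neg_zero]) s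
    rw [hc', ← this]
    congr 1
    module
  have hcc' : ∀ s, ⟪c s, c' s⟫ = 0 := fun s => by
    simp only [hc, hc', inner_add_left, inner_add_right, real_inner_smul_left,
      real_inner_smul_right, hxv, hvx, real_inner_self_eq_norm_sq, hx, hv]
    ring
  have hcd : ∀ s, HasDerivAt c (c' s) s := fun s =>
    ((Real.hasDerivAt_cos s).smul_const x).add ((Real.hasDerivAt_sin s).smul_const v)
  have hcd' : ∀ s, HasDerivAt c' (-c s) s := fun s =>
    (((Real.hasDerivAt_sin s).neg.smul_const x).add
      ((Real.hasDerivAt_cos s).smul_const v)).congr_deriv (by simp only [hc]; module)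
  have h1 : ∀ s, HasDerivAt (fun s => f (c s)) ⟪gradient f (c s), c' s⟫ s := fun s => by
    rw [inner_gradient_eq]
    exact (hf.differentiable two_ne_zero _).hasFDerivAt.comp_hasDerivAt s (hcd s)
  have h2 : ∀ s, HasDerivAt (fun s => ⟪gradient f (c s), c' s⟫) ⟪sHess f (c s) (c' s), c' s⟫ s :=
    fun s => by
      have hg : HasFDerivAt (gradient f) (hess f (c s)) (c s) :=
        ((contDiff_gradient hf).differentiable one_ne_zero _).hasFDerivAt
      refine ((hg.comp_hasDerivAt s (hcd s)).inner ℝ (hcd' s)).congr_deriv ?_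
      simp only [Function.comp_apply]
      rw [sHess_apply f (hcc' s), inner_sub_left, inner_sub_left, real_inner_smul_left,
        real_inner_smul_left, hcc' s, real_inner_self_eq_norm_sq, hnc' s, inner_neg_right]
      ring
  have h3 : ∀ s, -1 ≤ ⟪sHess f (c s) (c' s), c' s⟫ := fun s => by
    refine (abs_le.1 ((abs_real_inner_le_norm _ _).trans ?_)).1
    have := (sHess f (c s)).le_of_opNorm_le (hop _ (by simpa using hnc s)) (c' s)
    rwa [hnc' s, mul_one] at this ⊢
  have hc0 : c 0 = x := by simp [hc]
  have hloc : IsLocalMax (fun s => f (c s)) 0 := Filter.Eventually.of_forall fun s => by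
    simp only [hc0]
    exact hmax (by simpa using hnc s)
  have := sub_sq_div_two_le h1 h2 h3 (hloc.hasDerivAt_eq_zero (h1 0)) hs
  rwa [hc0] at this

lemma sHess_const_mul (hf : ContDiff ℝ 2 f) (a : ℝ) (x : E n) :
    sHess (fun x => a * f x) x = a • sHess f x := by
  have h : gradient (fun x => a * f x) = fun x => a • gradient f x := funext fun x => by
    simp [gradient, fderiv_const_mul (hf.differentiable two_ne_zero x)]
  have h2 : hess (fun x => a * f x) x = a • hess f x := by
    rw [hess, h]
    exact fderiv_const_smul ((contDiff_gradient hf).differentiable one_ne_zero x) a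
  ext1 w
  simp only [sHess, h, h2, real_inner_smul_left, ContinuousLinearMap.comp_apply, sub_apply,
    smul_apply, map_sub, map_smul, mul_smul, smul_sub]

/-- A function with spherical Hessian bounded by one oscillates by at most `π² / 4`. -/
lemma apply_sub_apply_le (hn : 2 ≤ n) (hf : ContDiff ℝ 2 f)
    (hop : ∀ x ∈ Metric.sphere (0 : E n) 1, ‖sHess f x‖ ≤ 1) {x y : E n} (hx : ‖x‖ = 1)
    (hy : ‖y‖ = 1) : f x - f y ≤ Real.pi ^ 2 / 4 := by
  have hne : (Metric.sphere (0 : E n) 1).Nonempty := ⟨x, by simpa using hx⟩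
  obtain ⟨p, hp, hmax⟩ :=
    (isCompact_sphere (0 : E n) 1).exists_isMaxOn hne hf.continuous.continuousOn
  obtain ⟨q, hq, hmin⟩ :=
    (isCompact_sphere (0 : E n) 1).exists_isMinOn hne hf.continuous.continuousOn
  have hfx : f x ≤ f p := hmax (by simpa using hx)
  have hfy : f q ≤ f y := hmin (by simpa using hy)
  have hp1 : ‖p‖ = 1 := by simpa using hp
  have hq1 : ‖q‖ = 1 := by simpa using hq
  obtain ⟨v, hv, hpv, θ, ⟨hθ, hθ'⟩, hqe⟩ := exists_eq_cos_smul_add_sin_smul hn hp1 hq1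
  have hvp : ⟪v, p⟫ = 0 := by rw [real_inner_comm, hpv]
  have h1 := sub_sq_div_two_le_apply_of_isMaxOn hf hop hp1 hmax hv hpv (div_nonneg hθ zero_le_two)
  have hu : ‖Real.sin θ • p - Real.cos θ • v‖ = 1 := by
    rw [← norm_cos_smul_add_sin_smul hv (norm_neg p ▸ hp1 : ‖-p‖ = 1)
      (by rw [inner_neg_right, hvp, neg_zero]) θ, ← norm_neg]
    congr 1
    module
  have hqu : ⟪q, Real.sin θ • p - Real.cos θ • v⟫ = 0 := by
    simp only [hqe, inner_add_left, inner_sub_right, real_inner_smul_left,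
      real_inner_smul_right, hpv, hvp, real_inner_self_eq_norm_sq, hp1, hv]
    ring
  have h2 := sub_sq_div_two_le_apply_of_isMaxOn (f := fun x => -1 * f x) (by fun_prop)
    (fun x hx => by rw [sHess_const_mul hf, norm_smul]; simpa using hop x hx) hq1
    (fun z hz => by simpa using hmin hz) hu hqu (div_nonneg hθ zero_le_two)
  have hmid : Real.cos (θ / 2) • q + Real.sin (θ / 2) • (Real.sin θ • p - Real.cos θ • v) =
      Real.cos (θ / 2) • p + Real.sin (θ / 2) • v := by
    have hc : Real.cos (θ / 2) = Real.cos θ * Real.cos (θ / 2) + Real.sin θ * Real.sin (θ / 2) := by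
      rw [← Real.cos_sub]; ring_nf
    have hs : Real.sin (θ / 2) = Real.sin θ * Real.cos (θ / 2) - Real.cos θ * Real.sin (θ / 2) := by
      rw [← Real.sin_sub]; ring_nf
    refine Eq.trans ?_ (congrArg₂ (fun a b : ℝ => a • p + b • v) hc.symm hs.symm)
    rw [hqe]
    module
  rw [hmid] at h2
  nlinarith

lemma exp_mul_le {c M : ℝ} (hc₀ : 0 ≤ c) (hc₁ : c ≤ 1) (hM : 0 ≤ M) :
    Real.exp (c * M) - 1 - c * M ≤ c ^ 2 * (Real.exp M - 1 - M) := by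
  have key : ∀ x : ℝ, HasSum (fun k => x ^ (k + 2) / (k + 2).factorial) (Real.exp x - 1 - x) := by
    intro x
    have := (hasSum_nat_add_iff' 2).2 (NormedSpace.expSeries_div_hasSum_exp (𝔸 := ℝ) x)
    rw [← Real.exp_eq_exp_ℝ] at this
    simpa [Finset.sum_range_succ, sub_sub] using this
  refine hasSum_le (fun k => ?_) (key (c * M)) ((key M).mul_left (c ^ 2))
  rw [mul_pow, ← mul_div_assoc]
  gcongr ?_ * _ / _
  exact pow_le_pow_of_le_one hc₀ hc₁ (by omega)

lemma exp_le_one_add_add {M K x : ℝ} (hM : 0 < M) (hK : Real.exp M ≤ 1 + M + K * M ^ 2)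
    (h₀ : 0 ≤ x) (h₁ : x ≤ M) : Real.exp x ≤ 1 + x + K * x ^ 2 := by
  have h := exp_mul_le (div_nonneg h₀ hM.le) ((div_le_one hM).2 h₁) hM.le
  rw [div_mul_cancel₀ _ hM.ne'] at h
  have h2 : (x / M) ^ 2 * (Real.exp M - 1 - M) ≤ (x / M) ^ 2 * (K * M ^ 2) :=
    mul_le_mul_of_nonneg_left (by linarith) (sq_nonneg _)
  have h3 : (x / M) ^ 2 * (K * M ^ 2) = K * x ^ 2 := by field_simp
  linarith

end Oscillation

section LowDimension

variable [NeZero n] {f : E n → ℝ}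

lemma integral_exp_mul_abs_le_two (hf : Continuous f) {c K M : ℝ} (hc : 0 ≤ c) (hM : 0 < M)
    (hK : Real.exp M ≤ 1 + M + K * M ^ 2)
    (hfM : ∀ x ∈ Metric.sphere (0 : E n) 1, c * |f x| ≤ M)
    (hint : (1 + K) * (c ^ 2 * ∫ x, f x ^ 2 ∂sphMeasure n) ≤ 3 / 4) :
    ∫ x, Real.exp (c * |f x|) ∂sphMeasure n ≤ 2 := by
  calc ∫ x, Real.exp (c * |f x|) ∂sphMeasure n
      ≤ ∫ x, (5 / 4 + (1 + K) * (c ^ 2 * f x ^ 2)) ∂sphMeasure n := by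
        refine integral_mono_ae (integrable_sphMeasure (by fun_prop))
          (integrable_sphMeasure (by fun_prop)) ?_
        filter_upwards [ae_sphMeasure_mem_sphere n] with x hx
        have h := exp_le_one_add_add hM hK (mul_nonneg hc (abs_nonneg _)) (hfM x hx)
        have h2 : (c * |f x|) ^ 2 = c ^ 2 * f x ^ 2 := by rw [mul_pow, sq_abs]
        rw [h2] at h
        nlinarith [sq_nonneg (c * |f x| - 1 / 2)]
    _ = 5 / 4 + (1 + K) * (c ^ 2 * ∫ x, f x ^ 2 ∂sphMeasure n) := by
        rw [integral_add (integrable_const _) (integrable_sphMeasure (by fun_prop)),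
          integral_const_mul, integral_const_mul]
        simp
    _ ≤ 2 := by linarith

lemma integral_sq_le_of_sub_le (hf : Continuous f) (hmean : ∫ x, f x ∂sphMeasure n = 0) {D : ℝ}
    (hD : ∀ x y : E n, ‖x‖ = 1 → ‖y‖ = 1 → f x - f y ≤ D) :
    ∫ x, f x ^ 2 ∂sphMeasure n ≤ D ^ 2 / 4 := by
  obtain ⟨v, hv⟩ := (ae_orthonormal (n := n)).exists
  have hne : (Metric.sphere (0 : E n) 1).Nonempty := ⟨v 0, by simpa using hv.1 0⟩
  obtain ⟨q, hq, hmin⟩ := (isCompact_sphere (0 : E n) 1).exists_isMinOn hne hf.continuousOn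
  have h : ∫ x, f x ^ 2 ∂sphMeasure n ≤
      ∫ x, ((2 * f q + D) * f x - f q * (f q + D)) ∂sphMeasure n := by
    refine integral_mono_ae (integrable_sphMeasure (by fun_prop))
      (integrable_sphMeasure (by fun_prop)) ?_
    filter_upwards [ae_sphMeasure_mem_sphere n] with x hx
    have h1 : f q ≤ f x := hmin hx
    have h2 := hD x q (by simpa using hx) (by simpa using hq)
    nlinarith
  rw [integral_sub (integrable_sphMeasure (by fun_prop)) (integrable_const _), integral_const_mul,
    hmean] at h
  simp only [integral_const, probReal_univ, one_smul] at h
  nlinarith [sq_nonneg (2 * f q + D)]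

lemma abs_le_of_sub_le (hf : Continuous f) (hmean : ∫ x, f x ∂sphMeasure n = 0) {D : ℝ}
    (hD : ∀ x y : E n, ‖x‖ = 1 → ‖y‖ = 1 → f x - f y ≤ D) {x : E n} (hx : ‖x‖ = 1) :
    |f x| ≤ D := by
  have hi := integrable_sphMeasure hf
  have h1 : ∫ y, (f x - f y) ∂sphMeasure n ≤ ∫ _, D ∂sphMeasure n := by
    refine integral_mono_ae ((integrable_const _).sub hi) (integrable_const _) ?_
    filter_upwards [ae_sphMeasure_mem_sphere n] with y hy using hD x y hx (by simpa using hy)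
  have h2 : ∫ y, (f y - f x) ∂sphMeasure n ≤ ∫ _, D ∂sphMeasure n := by
    refine integral_mono_ae (hi.sub (integrable_const _)) (integrable_const _) ?_
    filter_upwards [ae_sphMeasure_mem_sphere n] with y hy using hD y x (by simpa using hy) hx
  rw [integral_sub (integrable_const _) hi, hmean] at h1
  rw [integral_sub hi (integrable_const _), hmean] at h2
  simp only [integral_const, probReal_univ, one_smul] at h1 h2
  exact abs_le.2 ⟨by linarith, by linarith⟩

lemma exp_five_fourths_mul_le (k : ℕ) {B : ℝ} (hB : 0 ≤ B) (h : 2.7182818286 ^ (5 * k) ≤ B ^ 4) :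
    Real.exp (k * (5 / 4)) ≤ B := by
  refine le_of_pow_le_pow_left₀ four_ne_zero hB (le_trans ?_ h)
  rw [← Real.exp_nat_mul,
    show ((4 : ℕ) : ℝ) * (k * (5 / 4)) = (5 * k : ℕ) * 1 by push_cast; ring, Real.exp_nat_mul]
  exact pow_le_pow_left₀ (Real.exp_pos 1).le Real.exp_one_lt_d9.le _

lemma integral_exp_abs_le_two_of_le_five (hn : 2 ≤ n) (hn5 : n ≤ 5) (hf : ContDiff ℝ 2 f)
    (hmean : ∫ x, f x ∂sphMeasure n = 0)
    (hlin : ∀ e : E n, ∫ x, ⟪e, x⟫ * f x ∂sphMeasure n = 0)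
    (hop : ∀ x ∈ Metric.sphere (0 : E n) 1, ‖sHess f x‖ ≤ 1) {β : ℝ} (hβ : 0 ≤ β)
    (hHS : ∫ x, hsNormSq (sHess f x) ∂sphMeasure n ≤ β) :
    ∫ x, Real.exp (((n : ℝ) - 1) / (2 * (1 + β)) * |f x|) ∂sphMeasure n ≤ 2 := by
  have hD : ∀ x y : E n, ‖x‖ = 1 → ‖y‖ = 1 → f x - f y ≤ 5 / 2 := fun x y hx hy =>
    (apply_sub_apply_le hn hf hop hx hy).trans (by nlinarith [Real.pi_pos, Real.pi_lt_d2])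
  have hn' : (2 : ℝ) ≤ n := by exact_mod_cast hn
  set I := ∫ x, f x ^ 2 ∂sphMeasure n with hI
  have hI0 : 0 ≤ I := integral_nonneg fun x => by positivity
  set t := ((n : ℝ) - 1) / (2 * (1 + β)) with ht
  have ht0 : 0 ≤ t := div_nonneg (by linarith) (by positivity)
  have ht1 : t ≤ ((n : ℝ) - 1) / 2 :=
    div_le_div_of_nonneg_left (by linarith) two_pos (by linarith)
  have hM : ∀ x ∈ Metric.sphere (0 : E n) 1, t * |f x| ≤ ((n : ℝ) - 1) * (5 / 4) := fun x hx => by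
    have := abs_le_of_sub_le hf.continuous hmean hD (x := x) (by simpa using hx)
    nlinarith [mul_le_mul ht1 this (abs_nonneg _) (by linarith)]
  have hδ : 3 ≤ n → 16 * ((n : ℝ) - 2) * (t ^ 2 * I) ≤ (n : ℝ) - 1 := fun h3 => by
    have h3' : (3 : ℝ) ≤ n := by exact_mod_cast h3
    have h := (mul_integral_sq_le h3 hf hmean hlin).trans hHS
    rw [← hI] at h
    have hβ2 : 4 * β ≤ (1 + β) ^ 2 := by nlinarith [sq_nonneg (1 - β)]
    rw [ht, div_pow, div_mul_eq_mul_div, mul_div_assoc', div_le_iff₀ (by positivity)]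
    nlinarith [mul_le_mul_of_nonneg_left (h.trans (by linarith : β ≤ (1 + β) ^ 2 / 4))
      (by linarith : (0 : ℝ) ≤ 16 * ((n : ℝ) - 1))]
  have main : ∀ (k : ℕ) (K : ℝ), (n : ℝ) = k + 1 → 0 < k →
      Real.exp (k * (5 / 4)) ≤ 1 + k * (5 / 4) + K * (k * (5 / 4)) ^ 2 →
      (1 + K) * (t ^ 2 * I) ≤ 3 / 4 → ∫ x, Real.exp (t * |f x|) ∂sphMeasure n ≤ 2 :=
    fun k K hk hk0 h1 h2 => by
      rw [hk, add_sub_cancel_right] at hM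
      exact integral_exp_mul_abs_le_two hf.continuous ht0 (by positivity) h1 hM h2
  obtain h | h | h | h : n = 2 ∨ n = 3 ∨ n = 4 ∨ n = 5 := by omega
  · have hnr : (n : ℝ) = 2 := by exact_mod_cast h
    have hI1 := integral_sq_le_of_sub_le hf.continuous hmean hD
    refine main 1 (4 / 5) (by rw [hnr]; norm_num) one_pos
      ((exp_five_fourths_mul_le 1 (B := 7 / 2) (by norm_num) (by norm_num)).trans (by norm_num)) ?_
    rw [hnr] at ht1
    nlinarith [mul_le_mul (pow_le_pow_left₀ ht0 ht1 2) hI1 hI0 (by positivity)]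
  · have hnr : (n : ℝ) = 3 := by exact_mod_cast h
    refine main 2 (174 / 125) (by rw [hnr]; norm_num) two_pos
      ((exp_five_fourths_mul_le 2 (B := 61 / 5) (by norm_num) (by norm_num)).trans
        (by norm_num)) ?_
    have := hδ h.ge
    rw [hnr] at this
    linarith
  · have hnr : (n : ℝ) = 4 := by exact_mod_cast h
    refine main 3 (673 / 250) (by rw [hnr]; norm_num) three_pos
      ((exp_five_fourths_mul_le 3 (B := 213 / 5) (by norm_num) (by norm_num)).trans
        (by norm_num)) ?_
    have := hδ (by omega)
    rw [hnr] at this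
    linarith
  · have hnr : (n : ℝ) = 5 := by exact_mod_cast h
    refine main 4 (57 / 10) (by rw [hnr]; norm_num) four_pos
      ((exp_five_fourths_mul_le 4 (B := 297 / 2) (by norm_num) (by norm_num)).trans
        (by norm_num)) ?_
    have := hδ (by omega)
    rw [hnr] at this
    linarith

end LowDimension

section Localization

lemma hsNormSq_smul (a : ℝ) (A : E n →L[ℝ] E n) : hsNormSq (a • A) = a ^ 2 * hsNormSq A := by
  simp [hsNormSq, norm_smul, mul_pow, Finset.mul_sum]

theorem integral_exp_abs_le_two [NeZero n] (hn : 2 ≤ n) {f : E n → ℝ} (hf : ContDiff ℝ 2 f)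
    (hmean : ∫ x, f x ∂sphMeasure n = 0)
    (hlin : ∀ e : E n, ∫ x, ⟪e, x⟫ * f x ∂sphMeasure n = 0)
    (hop : ∀ x ∈ Metric.sphere (0 : E n) 1, ‖sHess f x‖ ≤ 1) {b : ℝ} (hb : 0 ≤ b)
    (hHS : ∫ x, hsNormSq (sHess f x) ∂sphMeasure n ≤ b ^ 2) :
    ∫ x, Real.exp (((n : ℝ) - 1) / (2 * (1 + b ^ 2)) * |f x|) ∂sphMeasure n ≤ 2 := by
  rcases le_or_gt n 5 with h5 | h6
  · exact integral_exp_abs_le_two_of_le_five hn h5 hf hmean hlin hop (sq_nonneg b) hHS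
  rcases le_or_gt b 1 with h1 | h1
  · exact integral_exp_abs_le_two_of_le_one h6 hf hmean hlin hop (sq_nonneg b)
      (pow_le_one₀ hb h1) hHS
  have hn' : (2 : ℝ) ≤ n := by exact_mod_cast hn
  have hb0 : 0 < b := by linarith
  have hfc := hf.continuous
  have h := integral_exp_abs_le_two_of_le_one (f := fun x => b⁻¹ * f x) h6 (by fun_prop)
    (by rw [integral_const_mul, hmean, mul_zero])
    (fun e => by
      simp_rw [mul_left_comm _ b⁻¹]
      rw [integral_const_mul, hlin, mul_zero])
    (fun x hx => by
      rw [sHess_const_mul hf, norm_smul, norm_inv, Real.norm_of_nonneg hb]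
      exact mul_le_one₀ (inv_le_one_of_one_le₀ h1.le) (norm_nonneg _) (hop x hx))
    zero_le_one le_rfl
    (by
      simp_rw [sHess_const_mul hf, hsNormSq_smul]
      rw [integral_const_mul, inv_pow, inv_mul_le_one₀ (by positivity)]
      exact hHS)
  refine le_trans (integral_mono (integrable_sphMeasure (by fun_prop))
    (integrable_sphMeasure (by fun_prop)) fun x => Real.exp_le_exp.2 ?_) h
  rw [abs_mul, abs_of_pos (inv_pos.2 hb0), ← mul_assoc]
  refine mul_le_mul_of_nonneg_right ?_ (abs_nonneg _)
  rw [← div_eq_mul_inv, div_div]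
  refine div_le_div_of_nonneg_left (by linarith) (by positivity) ?_
  nlinarith [sq_nonneg (b - 1)]

lemma exists_contDiff_eventuallyEq {F : Type*} [NormedAddCommGroup F] [NormedSpace ℝ F]
    [FiniteDimensional ℝ F] {f : F → ℝ} {U S : Set F} {k : ℕ} (hU : IsOpen U) (hS : IsClosed S)
    (hSU : S ⊆ U) (hf : ContDiffOn ℝ k f U) :
    ∃ g : F → ℝ, ContDiff ℝ k g ∧ ∀ x ∈ S, g =ᶠ[nhds x] f := by
  obtain ⟨χ, h0, h1, -⟩ := exists_contMDiffMap_zero_one_nhds_of_isClosed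
    (n := (k : ℕ∞)) (modelWithCornersSelf ℝ F) hU.isClosed_compl hS
    (Set.disjoint_left.2 fun x hx hxS => hx (hSU hxS))
  refine ⟨fun x => χ x * f x, contDiff_iff_contDiffAt.2 fun x => ?_, fun x hx => ?_⟩
  · by_cases hx : x ∈ U
    · exact χ.contMDiff.contDiff.contDiffAt.mul (hf.contDiffAt (hU.mem_nhds hx))
    · have h : (fun x => χ x * f x) =ᶠ[nhds x] fun _ => 0 := by
        filter_upwards [eventually_nhdsSet_iff_forall.1 h0 x hx] with y hy
        rw [hy, zero_mul]
      exact contDiffAt_const.congr_of_eventuallyEq h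
  · filter_upwards [eventually_nhdsSet_iff_forall.1 h1 x hx] with y hy
    rw [hy, one_mul]

lemma sHess_congr {f g : E n → ℝ} {x : E n} (h : f =ᶠ[nhds x] g) : sHess f x = sHess g x := by
  have hg : gradient f =ᶠ[nhds x] gradient g :=
    h.fderiv.mono fun y hy => congrArg (InnerProductSpace.toDual ℝ (E n)).symm hy
  rw [sHess, sHess, hess, hess, hg.fderiv_eq, hg.eq_of_nhds]

end Localization

/-- **Theorem 1.1/1.2 variant (Statement 0).** Second order concentration on the sphere
in terms of the spherical Hessian. -/
theorem second_order_concentration_spherical_hessian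
    {n : ℕ} (hn : 2 ≤ n) (f : E n → ℝ) (U : Set (E n)) (hU : IsOpen U)
    (hUS : Metric.sphere (0 : E n) 1 ⊆ U) (hf : ContDiffOn ℝ 2 f U)
    (hmean : ∫ θ, f θ ∂sphMeasure n = 0)
    (hlin : ∀ v : E n, ∫ θ, ⟪v, θ⟫ * f θ ∂sphMeasure n = 0)
    (hop : ∀ θ ∈ Metric.sphere (0 : E n) 1, ‖sHess f θ‖ ≤ 1)
    {b : ℝ} (hb : 0 ≤ b)
    (hHS : ∫ θ, hsNormSq (sHess f θ) ∂sphMeasure n ≤ b ^ 2) :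
    ∫ θ, Real.exp (((n : ℝ) - 1) / (2 * (1 + b ^ 2)) * |f θ|) ∂sphMeasure n ≤ 2 := by
  have : NeZero n := ⟨by omega⟩
  obtain ⟨g, hg, hgf⟩ := exists_contDiff_eventuallyEq (k := 2) hU Metric.isClosed_sphere hUS hf
  have hae : ∀ᵐ θ ∂sphMeasure n, g =ᶠ[nhds θ] f := by
    filter_upwards [ae_sphMeasure_mem_sphere n] with θ hθ using hgf θ hθ
  have hcongr : ∀ Φ Ψ : E n → ℝ, (∀ θ, g =ᶠ[nhds θ] f → Φ θ = Ψ θ) →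
      ∫ θ, Φ θ ∂sphMeasure n = ∫ θ, Ψ θ ∂sphMeasure n := fun Φ Ψ h =>
    integral_congr_ae (hae.mono h)
  rw [← hcongr (fun θ => Real.exp (((n : ℝ) - 1) / (2 * (1 + b ^ 2)) * |g θ|)) _ fun θ h => by
    rw [h.eq_of_nhds]]
  refine integral_exp_abs_le_two hn hg ?_ (fun v => ?_) (fun θ hθ => ?_) hb ?_
  · rw [← hmean]
    exact hcongr _ _ fun θ h => h.eq_of_nhds
  · rw [← hlin v]
    exact hcongr _ _ fun θ h => by rw [h.eq_of_nhds]
  · rw [sHess_congr (hgf θ hθ)]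
    exact hop θ hθ
  · rw [hcongr _ (fun θ => hsNormSq (sHess f θ)) fun θ h => by rw [sHess_congr h]]
    exact hHS

end SecondOrderConc
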